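/- arXiv:0805.1493 — 2 statements merged into one kernel-verified Lean document; each statement's English description precedes it below -/
import Mathlib

section
/- Let M be a compact connected boundaryless topological manifold of dimension n with a compatible metric and let f : M → M be an expansive homeomorphism. Then there exists ε > 0 such that for every r with 1 ≤ r ≤ n−1 and every p ∈ Per_H^r there exists a map φ : D̄^r → M, where D̄^r is the closed unit ball of ℝ^r, which is a homeomorphism onto its image, satisfies φ(D̄^r) ⊆ W^s(p) and φ(0) = p, and is such that for every continuous curve y : [0,1] → D̄^r with y(0) = 0 and ‖y(1)‖ = 1 there exists s ∈ (0,1] with φ(y(s)) ∉ B_ε(p). -/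
open Metric Set

variable {M : Type*} [MetricSpace M]

/-- Iterates of a homeomorphism, indexed by `ℤ`. -/
def iterZ (f : M ≃ₜ M) (k : ℤ) (x : M) : M := (f.toEquiv ^ k) x

/-- `f` is expansive with expansivity constant `α`. -/
def IsExpansive (f : M ≃ₜ M) (α : ℝ) : Prop :=
  ∀ x y : M, x ≠ y → ∃ k : ℤ, α < dist (iterZ f k x) (iterZ f k y)

/-- Stable set of `x`. -/
def Ws (f : M ≃ₜ M) (x : M) : Set M :=
  {y | Filter.Tendsto (fun k : ℤ => dist (iterZ f k x) (iterZ f k y)) Filter.atTop (nhds 0)}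

/-- Unstable set of `x`. -/
def Wu (f : M ≃ₜ M) (x : M) : Set M :=
  {y | Filter.Tendsto (fun k : ℤ => dist (iterZ f k x) (iterZ f k y)) Filter.atBot (nhds 0)}

/-- Local (`ε`-local) stable set of `x`. -/
def WsLoc (f : M ≃ₜ M) (ε : ℝ) (x : M) : Set M :=
  {y | ∀ k : ℤ, 0 ≤ k → dist (iterZ f k x) (iterZ f k y) ≤ ε}

/-- Local (`ε`-local) unstable set of `x`. -/
def WuLoc (f : M ≃ₜ M) (ε : ℝ) (x : M) : Set M :=
  {y | ∀ k : ℤ, k ≤ 0 → dist (iterZ f k x) (iterZ f k y) ≤ ε}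

/-- The model space `ℝ^r × ℝ^{n-r}`. -/
abbrev ModelSp (n r : ℕ) := (Fin r → ℝ) × (Fin (n - r) → ℝ)

/-- The model hyperbolic linear map `L(a,b) = (a/2, 2b)`. -/
noncomputable def modelL (n r : ℕ) : ModelSp n r → ModelSp n r :=
  fun q => (fun i => q.1 i / 2, fun i => 2 * q.2 i)

/-- Topologically hyperbolic periodic points of index `r` (`Per_H^r`). -/
def PerHr (f : M ≃ₜ M) (n r : ℕ) : Set M :=
  {p | ∃ l : ℕ, 1 ≤ l ∧ (f.toEquiv ^ l) p = p ∧
    ∃ (U : Set M) (V : Set (ModelSp n r)) (h : U ≃ₜ V),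
      IsOpen U ∧ IsOpen V ∧ (0 : ModelSp n r) ∈ V ∧
      ∃ hp : p ∈ U, ((h ⟨p, hp⟩ : V) : ModelSp n r) = 0 ∧
        ∀ z : M, ∀ hz : z ∈ U, ∀ hz' : (f.toEquiv ^ l) z ∈ U,
          ((h ⟨(f.toEquiv ^ l) z, hz'⟩ : V) : ModelSp n r) = modelL n r (h ⟨z, hz⟩)}

/-- All topologically hyperbolic periodic points (`Per_H`). -/
def PerH (f : M ≃ₜ M) (n : ℕ) : Set M := ⋃ r ∈ Finset.range (n + 1), PerHr f n r

/-- `p` admits a local product structure. -/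
def AdmitsLPS (f : M ≃ₜ M) (n : ℕ) (p : M) : Prop :=
  ∃ (k : ℕ) (h : (Fin k → ℝ) × (Fin (n - k) → ℝ) → M) (ε : ℝ),
    0 < ε ∧ Topology.IsEmbedding h ∧ p ∈ Set.range h ∧
    ∀ x : Fin k → ℝ, ∀ y : Fin (n - k) → ℝ,
      h '' ({x} ×ˢ univ) = WsLoc f ε (h (x, y)) ∩ Set.range h ∧
      h '' (univ ×ˢ {y}) = WuLoc f ε (h (x, y)) ∩ Set.range h

lemma iterZ_add' {M : Type*} [MetricSpace M] (f : M ≃ₜ M) (a b : ℤ) (x : M) :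
    iterZ f (a + b) x = iterZ f a (iterZ f b x) := by
  simp only [iterZ, zpow_add, Equiv.Perm.mul_apply]

lemma iterZ_zero' {M : Type*} [MetricSpace M] (f : M ≃ₜ M) (x : M) :
    iterZ f 0 x = x := by
  simp [iterZ]

lemma iterZ_cont {M : Type*} [MetricSpace M] (f : M ≃ₜ M) (k : ℤ) :
    Continuous (iterZ f k) := by
  induction k with
  | zero =>
    have : iterZ f 0 = id := funext (iterZ_zero' f)
    rw [this]; exact continuous_id
  | succ n ih =>
    have : iterZ f ((n : ℤ) + 1) = iterZ f n ∘ f := by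
      funext x; rw [iterZ_add']; simp [iterZ]
    rw [this]; exact ih.comp f.continuous
  | pred n ih =>
    have : iterZ f (-(n : ℤ) - 1) = iterZ f (-(n : ℤ)) ∘ f.symm := by
      funext x
      rw [sub_eq_add_neg, iterZ_add']
      simp only [iterZ, zpow_neg_one, Function.comp]
      rfl
    rw [this]; exact ih.comp f.symm.continuous

/-- Uniform expansivity. -/
lemma unif_exp {M : Type*} [MetricSpace M] [CompactSpace M] (f : M ≃ₜ M) (α : ℝ)
    (hexp : IsExpansive f α) (η : ℝ) (hη : 0 < η) :
    ∃ N : ℕ, ∀ x y : M, (∀ j : ℤ, -(N : ℤ) ≤ j → dist (iterZ f j x) (iterZ f j y) ≤ α) →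
      dist x y < η := by
  by_contra! hcon
  let K : ℕ → Set (M × M) := fun N => {q | η ≤ dist q.1 q.2 ∧
    ∀ j : ℤ, -(N : ℤ) ≤ j → dist (iterZ f j q.1) (iterZ f j q.2) ≤ α}
  have hcl : ∀ N, IsClosed (K N) := by
    intro N
    have : K N = {q | η ≤ dist q.1 q.2} ∩
        ⋂ j : ℤ, ⋂ _ : -(N : ℤ) ≤ j, {q : M × M | dist (iterZ f j q.1) (iterZ f j q.2) ≤ α} := by
      ext q; simp [K]
    rw [this]
    refine IsClosed.inter (isClosed_le continuous_const continuous_dist) ?_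
    refine isClosed_iInter fun j => isClosed_iInter fun _ => ?_
    exact isClosed_le (((iterZ_cont f j).comp continuous_fst).dist
      ((iterZ_cont f j).comp continuous_snd)) continuous_const
  have hne : (⋂ N, K N).Nonempty := by
    refine IsCompact.nonempty_iInter_of_sequence_nonempty_isCompact_isClosed K ?_ ?_
      (hcl 0).isCompact hcl
    · intro N q hq
      refine ⟨hq.1, fun j hj => hq.2 j ?_⟩
      push_cast; omega
    · intro N
      obtain ⟨x, y, h1, h2⟩ := hcon N
      exact ⟨(x, y), h2, h1⟩
  obtain ⟨⟨x, y⟩, hq⟩ := hne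
  rw [mem_iInter] at hq
  have hxy : x ≠ y := by
    intro h
    have := (hq 0).1
    simp only [h, dist_self] at this
    linarith
  obtain ⟨k, hk⟩ := hexp x y hxy
  have := (hq k.natAbs).2 k (by omega)
  simp only at this
  linarith

lemma unif_cont_fin {M : Type*} [MetricSpace M] [CompactSpace M] (f : M ≃ₜ M) (e : ℝ)
    (he : 0 < e) (N : ℕ) :
    ∃ ρ : ℝ, 0 < ρ ∧ ∀ x y : M, dist x y < ρ → ∀ j : ℕ, j ≤ N →
      dist (iterZ f j x) (iterZ f j y) < e := by
  induction N with
  | zero =>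
    refine ⟨e, he, fun x y h j hj => ?_⟩
    obtain rfl : j = 0 := by omega
    simpa [iterZ_zero'] using h
  | succ N ih =>
    obtain ⟨ρ, hρ, h⟩ := ih
    have hu := CompactSpace.uniformContinuous_of_continuous (iterZ_cont f ((N + 1 : ℕ) : ℤ))
    obtain ⟨ρ', hρ', h'⟩ := Metric.uniformContinuous_iff.1 hu e he
    refine ⟨min ρ ρ', lt_min hρ hρ', fun x y hxy j hj => ?_⟩
    rcases Nat.lt_or_ge N j with hlt | hle
    · obtain rfl : j = N + 1 := by omega
      exact h' (lt_of_lt_of_le hxy (min_le_right _ _))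
    · exact h x y (lt_of_lt_of_le hxy (min_le_left _ _)) j hle

/-- A local stable disk. -/
lemma local_disk {M : Type*} [MetricSpace M] (f : M ≃ₜ M) (n r : ℕ) (p : M)
    (hp : p ∈ PerHr f n r) :
    ∃ l : ℕ, 1 ≤ l ∧ iterZ f l p = p ∧ ∃ H : EuclideanSpace ℝ (Fin r) → M,
      ContinuousOn H (closedBall 0 1) ∧ InjOn H (closedBall 0 1) ∧ H 0 = p ∧
      ∀ x ∈ closedBall (0 : EuclideanSpace ℝ (Fin r)) 1,
        iterZ f l (H x) = H ((1 / 2 : ℝ) • x) := by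
  obtain ⟨l, hl, hlp, U, V, h, hU, hV, h0, hpU, hh0, hconj⟩ := hp
  have hcast : ∀ z, (f.toEquiv ^ l) z = iterZ f l z := by
    intro z; simp [iterZ]
  simp only [hcast] at hlp hconj
  have hsymm0 : ((h.symm ⟨0, h0⟩ : U) : M) = p := by
    have : (⟨0, h0⟩ : V) = h ⟨p, hpU⟩ := Subtype.ext hh0.symm
    rw [this, h.symm_apply_apply]
  let S : Set V := {u | iterZ f l (h.symm u : U) ∈ U}
  have hS : IsOpen S :=
    hU.preimage ((iterZ_cont f l).comp (continuous_subtype_val.comp h.symm.continuous))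
  let T : Set (ModelSp n r) := Subtype.val '' S
  have hT : IsOpen T := hV.isOpenMap_subtype_val S hS
  have h0T : (0 : ModelSp n r) ∈ T := by
    refine ⟨⟨0, h0⟩, ?_, rfl⟩
    change iterZ f l (h.symm ⟨0, h0⟩ : U) ∈ U
    rw [hsymm0, hlp]; exact hpU
  let ψ : EuclideanSpace ℝ (Fin r) → ModelSp n r := fun x => (fun i => x i, 0)
  have hψ : Continuous ψ := by
    refine Continuous.prodMk (continuous_pi fun i => ?_) continuous_const
    fun_prop
  have hψ0 : ψ 0 = 0 := by
    ext <;> simp [ψ]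
  have hψT : ψ ⁻¹' T ∈ nhds (0 : EuclideanSpace ℝ (Fin r)) :=
    (hT.preimage hψ).mem_nhds (by rw [mem_preimage, hψ0]; exact h0T)
  obtain ⟨δ, hδ, hδT⟩ := Metric.nhds_basis_closedBall.mem_iff.1 hψT
  have hmem : ∀ x ∈ closedBall (0 : EuclideanSpace ℝ (Fin r)) 1, ψ (δ • x) ∈ T := by
    intro x hx
    apply hδT
    rw [mem_closedBall_zero_iff] at hx ⊢
    rw [norm_smul, Real.norm_of_nonneg hδ.le]
    nlinarith
  have hTV : ∀ q ∈ T, q ∈ V := by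
    rintro q ⟨u, _, rfl⟩; exact u.2
  classical
  let H' : ModelSp n r → M := fun q => if hq : q ∈ V then (h.symm ⟨q, hq⟩ : U) else p
  have hH' : ∀ q (hq : q ∈ V), H' q = (h.symm ⟨q, hq⟩ : U) := fun q hq => by simp [H', hq]
  have hH'c : ContinuousOn H' V := by
    rw [continuousOn_iff_continuous_domRestrict]
    have : V.domRestrict H' = fun u => ((h.symm u : U) : M) := by
      funext u; exact hH' u.1 u.2
    rw [this]
    exact continuous_subtype_val.comp h.symm.continuous
  refine ⟨l, hl, hlp, fun x => H' (ψ (δ • x)), ?_, ?_, ?_, ?_⟩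
  · refine hH'c.comp (hψ.comp (continuous_const_smul δ)).continuousOn ?_
    intro x hx; exact hTV _ (hmem x hx)
  · intro x hx y hy hxy
    simp only [hH' _ (hTV _ (hmem x hx)), hH' _ (hTV _ (hmem y hy))] at hxy
    have h1 := h.symm.injective (Subtype.ext hxy)
    have h2 : ψ (δ • x) = ψ (δ • y) := congrArg Subtype.val h1
    ext i
    have h3 := congrFun (congrArg Prod.fst h2) i
    simp only [ψ, PiLp.smul_apply, smul_eq_mul] at h3
    exact mul_left_cancel₀ hδ.ne' h3
  · simp only [smul_zero, hψ0]
    rw [hH' 0 h0, hsymm0]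
  · intro x hx
    have hx2 : (1 / 2 : ℝ) • x ∈ closedBall (0 : EuclideanSpace ℝ (Fin r)) 1 := by
      rw [mem_closedBall_zero_iff] at hx ⊢
      rw [norm_smul]; norm_num; linarith
    simp only [hH' _ (hTV _ (hmem x hx)), hH' _ (hTV _ (hmem _ hx2))]
    have hgU : iterZ f l (h.symm ⟨_, hTV _ (hmem x hx)⟩ : U) ∈ U := by
      obtain ⟨u, hu, hu'⟩ := hmem x hx
      have : u = ⟨_, hTV _ (hmem x hx)⟩ := Subtype.ext hu'
      rw [← this]; exact hu
    have hc := hconj _ (h.symm ⟨_, hTV _ (hmem x hx)⟩ : U).2 hgU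
    simp only [Subtype.coe_eta, h.apply_symm_apply] at hc
    have hv : modelL n r (ψ (δ • x)) = ψ (δ • (1 / 2 : ℝ) • x) := by
      ext i
      · simp only [modelL, ψ, PiLp.smul_apply, smul_eq_mul]; ring
      · simp [modelL, ψ]
    have h5 : h ⟨_, hgU⟩ = ⟨_, hTV _ (hmem _ hx2)⟩ := Subtype.ext (hc.trans hv)
    rw [← h5, h.symm_apply_apply]

/-- Uniform contraction of the local disk. -/
lemma disk_contract {M : Type*} [MetricSpace M] [CompactSpace M] (f : M ≃ₜ M) (r : ℕ) (p : M)
    (l : ℕ) (hl : 1 ≤ l) (hlp : iterZ f l p = p) (H : EuclideanSpace ℝ (Fin r) → M)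
    (hc : ContinuousOn H (closedBall 0 1)) (h0 : H 0 = p)
    (hH : ∀ x ∈ closedBall (0 : EuclideanSpace ℝ (Fin r)) 1,
        iterZ f l (H x) = H ((1 / 2 : ℝ) • x)) (e : ℝ) (he : 0 < e) :
    ∃ J : ℕ, ∀ x ∈ closedBall (0 : EuclideanSpace ℝ (Fin r)) 1, ∀ j : ℕ, J ≤ j →
      dist (iterZ f j p) (iterZ f j (H x)) < e := by
  obtain ⟨ρ, hρ, hρ'⟩ := unif_cont_fin f e he l
  have hit : ∀ i : ℕ, ∀ x ∈ closedBall (0 : EuclideanSpace ℝ (Fin r)) 1,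
      (1 / 2 : ℝ) ^ i • x ∈ closedBall (0 : EuclideanSpace ℝ (Fin r)) 1 ∧
      iterZ f ((l * i : ℕ) : ℤ) (H x) = H ((1 / 2 : ℝ) ^ i • x) := by
    intro i
    induction i with
    | zero => intro x hx; simpa [iterZ_zero'] using hx
    | succ i ih =>
      intro x hx
      obtain ⟨h1, h2⟩ := ih x hx
      constructor
      · rw [mem_closedBall_zero_iff] at h1 ⊢
        rw [pow_succ', mul_smul, norm_smul]; norm_num
        linarith
      · rw [show ((l * (i + 1) : ℕ) : ℤ) = (l : ℤ) + ((l * i : ℕ) : ℤ) by push_cast; ring,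
          iterZ_add', h2, hH _ h1, smul_smul, ← pow_succ']
  have hitp : ∀ i : ℕ, iterZ f ((l * i : ℕ) : ℤ) p = p := by
    intro i
    induction i with
    | zero => simp [iterZ_zero']
    | succ i ih =>
      rw [show ((l * (i + 1) : ℕ) : ℤ) = (l : ℤ) + ((l * i : ℕ) : ℤ) by push_cast; ring,
        iterZ_add', ih, hlp]
  have hca : ContinuousAt H 0 := hc.continuousAt (closedBall_mem_nhds _ one_pos)
  obtain ⟨σ, hσ, hσ'⟩ := Metric.continuousAt_iff.1 hca ρ hρ
  obtain ⟨I, hI⟩ := exists_pow_lt_of_lt_one hσ (by norm_num : (1 / 2 : ℝ) < 1)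
  refine ⟨l * I, fun x hx j hj => ?_⟩
  have hdm := Nat.div_add_mod j l
  have hjI : I ≤ j / l := (Nat.le_div_iff_mul_le (by omega)).2 (by rw [mul_comm]; exact hj)
  rw [show (j : ℤ) = ((j % l : ℕ) : ℤ) + ((l * (j / l) : ℕ) : ℤ) by
      rw [← Nat.cast_add]; congr 1; omega,
    iterZ_add', iterZ_add', hitp, (hit (j / l) x hx).2]
  refine hρ' _ _ ?_ _ (Nat.mod_lt j (by omega)).le
  rw [dist_comm, ← h0]
  apply hσ'
  rw [dist_zero_right, norm_smul, Real.norm_of_nonneg (by positivity)]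
  have h1 : (1 / 2 : ℝ) ^ (j / l) ≤ (1 / 2 : ℝ) ^ I :=
    pow_le_pow_of_le_one (by norm_num) (by norm_num) hjI
  rw [mem_closedBall_zero_iff] at hx
  have h2 : 0 ≤ (1 / 2 : ℝ) ^ (j / l) := by positivity
  nlinarith

/-- A curve in the stable set of `p` staying close to `p` has all forward iterates close. -/
lemma curve_small {M : Type*} [MetricSpace M] [CompactSpace M] (f : M ≃ₜ M) (α : ℝ) (hα : 0 < α)
    (hexp : IsExpansive f α) :
    ∃ ε : ℝ, 0 < ε ∧ ∀ (p : M) (c : ℝ → M), ContinuousOn c (Icc 0 1) → c 0 = p →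
      (∀ s ∈ Icc (0 : ℝ) 1, dist p (c s) < ε) →
      (∃ J : ℕ, ∀ s ∈ Icc (0 : ℝ) 1, ∀ j : ℕ, J ≤ j →
        dist (iterZ f j p) (iterZ f j (c s)) < α) →
      ∀ j : ℕ, dist (iterZ f j p) (iterZ f j (c 1)) ≤ α := by
  obtain ⟨N, hN⟩ := unif_exp f α hexp α hα
  obtain ⟨ε, hε, hε'⟩ := unif_cont_fin f α hα N
  refine ⟨ε, hε, ?_⟩
  rintro p c hc h0 hsm ⟨J, hJ⟩
  have hne : (Finset.range (J + 1)).Nonempty := ⟨0, by simp⟩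
  let F : ℝ → ℝ := fun s => (Finset.range (J + 1)).sup' hne
    fun j => dist (iterZ f j p) (iterZ f j (c s))
  have hF : ContinuousOn F (Icc 0 1) := by
    refine ContinuousOn.finset_sup'_apply hne fun j _ => ?_
    exact (continuous_const.dist continuous_id).comp_continuousOn ((iterZ_cont f j).comp_continuousOn hc)
  have hF0 : F 0 = 0 := by
    simp [F, h0]
  have hall : ∀ s ∈ Icc (0 : ℝ) 1, F s ≤ α → ∀ j : ℕ,
      dist (iterZ f j p) (iterZ f j (c s)) ≤ α := by
    intro s hs hFs j
    rcases le_total J j with h | h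
    · exact (hJ s hs j h).le
    · exact (Finset.le_sup' (fun j : ℕ => dist (iterZ f j p) (iterZ f j (c s)))
        (Finset.mem_range.2 (Nat.lt_succ_of_le h))).trans hFs
  apply hall 1 (by simp)
  by_contra! hlt
  obtain ⟨s, hs, hFs⟩ := intermediate_value_Icc (zero_le_one (α := ℝ)) hF
    (show α ∈ Icc (F 0) (F 1) from ⟨by rw [hF0]; exact hα.le, hlt.le⟩)
  obtain ⟨m, hm, hFm⟩ := Finset.exists_mem_eq_sup' hne
    (fun j : ℕ => dist (iterZ f j p) (iterZ f j (c s)))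
  have hm' : dist (iterZ f m p) (iterZ f m (c s)) = α := hFm.symm.trans hFs
  have hNm : N < m := by
    by_contra! hle
    have := hε' p (c s) (hsm s hs) m hle
    linarith
  have := hN (iterZ f m p) (iterZ f m (c s)) (by
    intro j hj
    rw [← iterZ_add', ← iterZ_add']
    have h1 := hall s hs hFs.le (j + m).toNat
    rwa [Int.toNat_of_nonneg (by omega)] at h1)
  linarith

/-- **Lemma (size of stable disks of periodic points).** There is a uniform `ε > 0` such
that each `p ∈ Per_H^r` has a disk `φ : D̄^r → W^s(p)`, a homeomorphism onto its image with
`φ(0) = p`, such that any curve in `D̄^r` from the center to the boundary has a point whose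
image leaves `B_ε(p)`. -/
theorem stmt7 {M : Type*} [MetricSpace M] [CompactSpace M] [ConnectedSpace M]
    (n : ℕ) [ChartedSpace (EuclideanSpace ℝ (Fin n)) M]
    (f : M ≃ₜ M) (α : ℝ) (hα : 0 < α) (hexp : IsExpansive f α) :
    ∃ ε : ℝ, 0 < ε ∧ ∀ r : ℕ, 1 ≤ r → r ≤ n - 1 → ∀ p ∈ PerHr f n r,
      ∃ φ : EuclideanSpace ℝ (Fin r) → M,
        Topology.IsEmbedding ((Metric.closedBall (0 : EuclideanSpace ℝ (Fin r)) 1).restrict φ) ∧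
        φ '' Metric.closedBall 0 1 ⊆ Ws f p ∧ φ 0 = p ∧
        ∀ y : ℝ → EuclideanSpace ℝ (Fin r), ContinuousOn y (Set.Icc 0 1) →
          (∀ t ∈ Set.Icc (0 : ℝ) 1, y t ∈ Metric.closedBall (0 : EuclideanSpace ℝ (Fin r)) 1) →
          y 0 = 0 → ‖y 1‖ = 1 →
          ∃ s ∈ Set.Ioc (0 : ℝ) 1, φ (y s) ∉ Metric.ball p ε := by
  obtain ⟨ε, hε, hcurve⟩ := curve_small f α hα hexp
  refine ⟨ε, hε, ?_⟩
  intro r _ _ p hp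
  obtain ⟨l, hl, hlp, H, hc, hinj, h0, hH⟩ := local_disk f n r p hp
  -- distance from `p` to the boundary sphere
  obtain ⟨η, hη, hη'⟩ : ∃ η : ℝ, 0 < η ∧
      ∀ x : EuclideanSpace ℝ (Fin r), ‖x‖ = 1 → η ≤ dist p (H x) := by
    have hK : IsCompact (H '' sphere 0 1) :=
      (isCompact_sphere _ _).image_of_continuousOn (hc.mono sphere_subset_closedBall)
    have hpK : p ∈ (H '' sphere 0 1)ᶜ := by
      rintro ⟨x, hx, hxp⟩
      have h1 : x = 0 := hinj (sphere_subset_closedBall hx) (by simp) (hxp.trans h0.symm)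
      rw [mem_sphere_zero_iff_norm, h1, norm_zero] at hx
      exact zero_ne_one hx
    obtain ⟨η, hη, hb⟩ := Metric.isOpen_iff.1 hK.isClosed.isOpen_compl p hpK
    refine ⟨η, hη, fun x hx => ?_⟩
    by_contra! hlt
    exact hb (by rwa [mem_ball, dist_comm]) ⟨x, by simpa using hx, rfl⟩
  obtain ⟨N, hN⟩ := unif_exp f α hexp η hη
  have hlN : N ≤ l * N := Nat.le_mul_of_pos_left N hl
  set K : ℕ := l * N with hKdef
  have hpK : iterZ f (K : ℤ) p = p := by
    have : ∀ i : ℕ, iterZ f ((l * i : ℕ) : ℤ) p = p := by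
      intro i
      induction i with
      | zero => simp [iterZ_zero']
      | succ i ih =>
        rw [show ((l * (i + 1) : ℕ) : ℤ) = (l : ℤ) + ((l * i : ℕ) : ℤ) by push_cast; ring,
          iterZ_add', ih, hlp]
    exact this N
  have hpK' : iterZ f (-(K : ℤ)) p = p := by
    conv_lhs => rw [← hpK]
    rw [← iterZ_add', neg_add_cancel, iterZ_zero']
  have hcontr : ∀ e : ℝ, 0 < e → ∃ J : ℕ,
      ∀ x ∈ closedBall (0 : EuclideanSpace ℝ (Fin r)) 1, ∀ j : ℤ, (J : ℤ) ≤ j →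
      dist (iterZ f j p) (iterZ f j (iterZ f (-(K : ℤ)) (H x))) < e := by
    intro e he
    obtain ⟨J, hJ⟩ := disk_contract f r p l hl hlp H hc h0 hH e he
    refine ⟨J + K, fun x hx j hj => ?_⟩
    push_cast at hj
    have h1 := hJ x hx (j + -(K : ℤ)).toNat (by omega)
    rw [Int.toNat_of_nonneg (by omega)] at h1
    rw [← iterZ_add']
    conv_lhs => rw [← hpK', ← iterZ_add']
    exact h1
  have hφc : ContinuousOn (fun x => iterZ f (-(K : ℤ)) (H x)) (closedBall 0 1) :=
    (iterZ_cont f _).comp_continuousOn hc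
  refine ⟨fun x => iterZ f (-(K : ℤ)) (H x), ?_, ?_, ?_, ?_⟩
  · haveI : CompactSpace (closedBall (0 : EuclideanSpace ℝ (Fin r)) 1) :=
      isCompact_iff_compactSpace.1 (isCompact_closedBall _ _)
    refine (Continuous.isClosedEmbedding (continuousOn_iff_continuous_domRestrict.1 hφc)
      ?_).isEmbedding
    intro x y hxy
    exact Subtype.ext (hinj x.2 y.2 ((f.toEquiv ^ (-(K : ℤ))).injective hxy))
  · rintro _ ⟨x, hx, rfl⟩
    refine Metric.tendsto_atTop.2 fun e he => ?_
    obtain ⟨J, hJ⟩ := hcontr e he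
    refine ⟨J, fun j hj => ?_⟩
    rw [Real.dist_0_eq_abs, abs_of_nonneg dist_nonneg]
    exact hJ x hx j hj
  · simp only [h0, hpK']
  · intro y hy hyb hy0 hy1
    by_contra! hcon
    have h1 := hcurve p (fun s => iterZ f (-(K : ℤ)) (H (y s))) (hφc.comp hy hyb)
      (by simp only [hy0, h0, hpK'])
      (by
        intro s hs
        rcases hs.1.eq_or_lt with h | h
        · simp only [← h, hy0, h0, hpK', dist_self]; exact hε
        · have := hcon s ⟨h, hs.2⟩
          rwa [mem_ball, dist_comm] at this)
      (by
        obtain ⟨J, hJ⟩ := hcontr α hα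
        exact ⟨J, fun s hs j hj => hJ _ (hyb s hs) j (by exact_mod_cast hj)⟩)
    have h2 := hN p (H (y 1)) (by
      intro j hj
      have h3 := h1 (j + K).toNat
      rw [Int.toNat_of_nonneg (by omega)] at h3
      rwa [← iterZ_add', add_assoc, add_neg_cancel, add_zero, iterZ_add', hpK] at h3)
    exact absurd (hη' _ hy1) (not_le.2 h2)
end

section
/- Let M be a compact connected boundaryless topological manifold of dimension n with a compatible metric and let f : M → M be an expansive homeomorphism. Then for every k with 1 ≤ k ≤ n−1, the set Per_H^k is open in Per_H: for every p ∈ Per_H^k there exists an open neighborhood V of p in M such that Per_H ∩ V ⊆ Per_H^k. -/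
open Metric Set

variable {M : Type*} [MetricSpace M]

/-- A determinant identity: `det (1 + A)` is an affine combination of `det (1 + tᵢ A)`. -/
lemma det_interp {E : Type*} [AddCommGroup E] [Module ℝ E] [FiniteDimensional ℝ E]
    (s : Finset ℝ) (hs : Module.finrank ℝ E < s.card) (A : E →ₗ[ℝ] E) :
    LinearMap.det (LinearMap.id + A) =
      ∑ t ∈ s, (Lagrange.basis s id t).eval 1 * LinearMap.det (LinearMap.id + t • A) := by
  classical
  let b := Module.finBasis ℝ E
  set B := LinearMap.toMatrix b b A with hB
  set P : Polynomial ℝ := Matrix.det ((Polynomial.X : Polynomial ℝ) • B.map Polynomial.C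
    + (1 : Matrix _ _ ℝ).map Polynomial.C) with hP
  have hdeg : P.natDegree < s.card := by
    refine lt_of_le_of_lt (Polynomial.natDegree_det_X_add_C_le B 1) ?_
    simpa using hs
  have hev : ∀ t : ℝ, P.eval t = LinearMap.det (LinearMap.id + t • A) := by
    intro t
    rw [← LinearMap.det_toMatrix b, hP, Polynomial.eval, ← Polynomial.coe_eval₂RingHom,
      RingHom.map_det]
    congr 1
    ext i j
    simp [hB, add_comm, Matrix.one_apply]
    split_ifs <;> simp [mul_comm]
  have h1 : P = Lagrange.interpolate s id (fun t => P.eval t) := by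
    apply Lagrange.eq_interpolate (injOn_id _)
    exact lt_of_le_of_lt Polynomial.degree_le_natDegree (by exact_mod_cast hdeg)
  have h2 := hev 1
  rw [one_smul] at h2
  rw [← h2]
  conv_lhs => rw [h1]
  rw [Lagrange.interpolate_apply, Polynomial.eval_finsetSum]
  refine Finset.sum_congr rfl fun t _ => ?_
  simp [hev, mul_comm]

lemma lipschitz_indicator {E : Type*} [NormedAddCommGroup E] [NormedSpace ℝ E]
    {R : ℝ} {u : E → E} {L : NNReal} (hL : LipschitzOnWith L u (closedBall 0 R))
    (hu : ∀ x, ‖x‖ = R → u x = 0) :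
    LipschitzWith L ((closedBall (0:E) R).indicator u) := by
  have key : ∀ x ∈ closedBall (0:E) R, ∀ y ∉ closedBall (0:E) R, dist (u x) 0 ≤ L * dist x y := by
    intro x hx y hy
    have hpre : IsPreconnected (segment ℝ x y) := (convex_segment x y).isPreconnected
    simp only [mem_closedBall, dist_zero_right, not_le] at hx hy
    obtain ⟨z, hz, hzR⟩ := hpre.intermediate_value (left_mem_segment ℝ x y)
      (right_mem_segment ℝ x y) continuous_norm.continuousOn ⟨hx, hy.le⟩
    have h1 := hL.dist_le_mul x (by simpa using hx) z (by simp at hzR ⊢; exact hzR.le)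
    rw [hu z hzR] at h1
    refine h1.trans ?_
    gcongr
    have := segment_subset_closedBall_left x y hz
    rwa [mem_closedBall, dist_comm] at this
  refine LipschitzWith.of_dist_le_mul fun x y => ?_
  by_cases hx : x ∈ closedBall (0:E) R <;> by_cases hy : y ∈ closedBall (0:E) R
  · rw [indicator_of_mem hx, indicator_of_mem hy]; exact hL.dist_le_mul x hx y hy
  · rw [indicator_of_mem hx, indicator_of_notMem hy]; exact key x hx y hy
  · rw [indicator_of_notMem hx, indicator_of_mem hy, dist_comm, dist_comm x]; exact key y hy x hx
  · rw [indicator_of_notMem hx, indicator_of_notMem hy]; simp; positivity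

/-- No `C¹` retraction of a ball onto its bounding sphere. -/
lemma no_smooth_retraction {E : Type*} [NormedAddCommGroup E] [InnerProductSpace ℝ E]
    [FiniteDimensional ℝ E] {R : ℝ} (hR : 0 < R) (s : E → E) (hs : ContDiff ℝ 1 s)
    (hsn : ∀ x, ‖s x‖ = R) (hsi : ∀ x, ‖x‖ = R → s x = x) : False := by
  let _ : MeasurableSpace E := borel E
  have _ : BorelSpace E := ⟨rfl⟩
  let μ : MeasureTheory.Measure E := MeasureTheory.Measure.addHaar
  set B := closedBall (0:E) R with hB
  set u : E → E := fun x => s x - x with hu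
  have hu1 : ContDiff ℝ 1 u := hs.sub contDiff_id
  have hBc : IsCompact B := isCompact_closedBall _ _
  have hdu : Continuous (fderiv ℝ u) := hu1.continuous_fderiv (by simp)
  -- Lipschitz
  obtain ⟨C, hC⟩ := hBc.exists_bound_of_continuousOn hdu.continuousOn
  set L : NNReal := ⟨max C 0, le_max_right _ _⟩ with hLdef
  have hL : LipschitzOnWith L u B := by
    refine Convex.lipschitzOnWith_of_nnnorm_fderiv_le (𝕜 := ℝ)
      (fun x _ => hu1.differentiable (by simp) x) (fun x hx => ?_) (convex_closedBall _ _)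
    rw [← NNReal.coe_le_coe]
    exact (hC x hx).trans (le_max_left _ _)
  have hLip := lipschitz_indicator hL (fun x hx => by simp [hu, hsi x hx])
  set v := B.indicator u with hv
  -- positivity of determinants for small t
  have hdetc : Continuous fun q : ℝ × E => (ContinuousLinearMap.id ℝ E + q.1 • fderiv ℝ u q.2).det := by
    apply ContinuousLinearMap.continuous_det.comp
    exact continuous_const.add (continuous_fst.smul (hdu.comp continuous_snd))
  have hpos : ∀ᶠ t in nhds (0:ℝ), ∀ x ∈ B,
      0 < (ContinuousLinearMap.id ℝ E + t • fderiv ℝ u x).det := by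
    apply hBc.eventually_forall_of_forall_eventually
    intro x _
    have : ContinuousAt (fun q : ℝ × E => (ContinuousLinearMap.id ℝ E + q.1 • fderiv ℝ u q.2).det) (0, x) :=
      hdetc.continuousAt
    refine this.eventually (lt_mem_nhds ?_)
    simp [ContinuousLinearMap.det]
  have hsmall : ∀ᶠ t in nhds (0:ℝ), |t| * (L:ℝ) < 1 := by
    have : ContinuousAt (fun t : ℝ => |t| * (L:ℝ)) 0 := by fun_prop
    exact this.eventually (gt_mem_nhds (by simp))
  have hint : ∀ t : ℝ, MeasureTheory.IntegrableOn
      (fun x => (ContinuousLinearMap.id ℝ E + t • fderiv ℝ u x).det) B μ := by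
    intro t
    apply ContinuousOn.integrableOn_compact hBc
    exact (hdetc.comp (continuous_const.prodMk continuous_id)).continuousOn
  have hev : ∀ᶠ t in nhds (0:ℝ),
      ∫ x in B, (ContinuousLinearMap.id ℝ E + t • fderiv ℝ u x).det ∂μ = (μ B).toReal := by
    filter_upwards [hpos, hsmall] with t ht1 ht2
    set g : E → E := fun x => x + t • v x with hg
    have happ : ApproximatesLinearOn g ((ContinuousLinearEquiv.refl ℝ E : E ≃L[ℝ] E) : E →L[ℝ] E) univ
        (‖t‖₊ * L) := by
      intro x _ y _
      have h1 : g x - g y - ((ContinuousLinearEquiv.refl ℝ E : E ≃L[ℝ] E) : E →L[ℝ] E) (x - y)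
          = t • (v x - v y) := by
        simp [hg, smul_sub]; abel
      rw [h1, norm_smul]
      have := hLip.dist_le_mul x y
      rw [dist_eq_norm, dist_eq_norm] at this
      push_cast
      rw [mul_assoc]
      gcongr
    have hcc : Subsingleton E ∨ (‖t‖₊ * L) <
        ‖(((ContinuousLinearEquiv.refl ℝ E).symm : E ≃L[ℝ] E) : E →L[ℝ] E)‖₊⁻¹ := by
      rcases subsingleton_or_nontrivial E with h | h
      · exact Or.inl h
      · right
        have : ‖(((ContinuousLinearEquiv.refl ℝ E).symm : E ≃L[ℝ] E) : E →L[ℝ] E)‖₊ = 1 := by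
          simp
        rw [this, inv_one, ← NNReal.coe_lt_coe]
        push_cast
        simpa using ht2
    have hinj : InjOn g B := (happ.injOn hcc).mono (subset_univ _)
    have hsurj := happ.surjective hcc
    have hgB : ∀ x, x ∈ B → g x = x + t • u x := fun x hx => by simp [hg, hv, indicator_of_mem hx]
    have hgN : ∀ x, x ∉ B → g x = x := fun x hx => by simp [hg, hv, indicator_of_notMem hx]
    have hsub : B ⊆ g '' B := by
      intro y hy
      obtain ⟨x, rfl⟩ := hsurj y
      by_cases hx : x ∈ B
      · exact ⟨x, hx, rfl⟩
      · rw [hgN x hx] at hy; exact absurd hy hx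
    have hsup : g '' B ⊆ B := by
      rintro _ ⟨x, hx, rfl⟩
      by_contra hcon
      obtain ⟨y, hy⟩ := hsurj (g x)
      have h2 := hgN _ hcon
      have h3 := happ.injOn hcc (mem_univ (g x)) (mem_univ x) h2
      rw [h3] at hcon; exact hcon hx
    have heq : g '' B = B := hsup.antisymm hsub
    have hder : ∀ x ∈ B, HasFDerivWithinAt g (ContinuousLinearMap.id ℝ E + t • fderiv ℝ u x) B x := by
      intro x hx
      have h1 : HasFDerivAt (fun x => x + t • u x) (ContinuousLinearMap.id ℝ E + t • fderiv ℝ u x) x :=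
        (hasFDerivAt_id x).add ((hu1.differentiable (by simp) x).hasFDerivAt.const_smul t)
      exact h1.hasFDerivWithinAt.congr hgB (hgB x hx)
    have h1 := MeasureTheory.lintegral_abs_det_fderiv_eq_addHaar_image μ hBc.measurableSet hder hinj
    rw [heq] at h1
    rw [← h1, MeasureTheory.integral_eq_lintegral_of_nonneg_ae]
    · congr 1
      refine MeasureTheory.setLIntegral_congr_fun hBc.measurableSet fun x hx => ?_
      simp only [abs_of_pos (ht1 x hx)]
    · refine (MeasureTheory.ae_restrict_iff' hBc.measurableSet).2 (Filter.Eventually.of_forall fun x hx => ?_)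
      exact (ht1 x hx).le
    · exact (hint t).aestronglyMeasurable
  -- choose the nodes
  have hinf : {t : ℝ | ∫ x in B, (ContinuousLinearMap.id ℝ E + t • fderiv ℝ u x).det ∂μ
      = (μ B).toReal}.Infinite := infinite_of_mem_nhds 0 hev
  obtain ⟨N, hN, hcard⟩ := hinf.exists_subset_card_eq (Module.finrank ℝ E + 1)
  have hdet0 : ∀ x, (ContinuousLinearMap.id ℝ E + (1:ℝ) • fderiv ℝ u x).det = 0 := by
    intro x
    have hsd : HasFDerivAt s (fderiv ℝ s x) x := (hs.differentiable (by simp) x).hasFDerivAt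
    have hux : ContinuousLinearMap.id ℝ E + (1:ℝ) • fderiv ℝ u x = fderiv ℝ s x := by
      have : HasFDerivAt u (fderiv ℝ s x - ContinuousLinearMap.id ℝ E) x :=
        hsd.sub (hasFDerivAt_id x)
      rw [this.fderiv]; simp
    rw [hux]
    by_contra hne
    have horth : ∀ w, inner ℝ (s x) (fderiv ℝ s x w) = 0 := by
      intro w
      have h1 := hsd.norm_sq
      have h2 : HasFDerivAt (fun y => ‖s y‖ ^ 2) (0 : E →L[ℝ] ℝ) x := by
        simp only [hsn]; exact hasFDerivAt_const _ _
      have h3 := congrArg (fun T : E →L[ℝ] ℝ => T w) (h1.unique h2)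
      simpa using h3
    have hsur : Function.Surjective (fderiv ℝ s x) := by
      exact (LinearMap.equivOfDetNeZero (fderiv ℝ s x : E →ₗ[ℝ] E) hne).surjective
    obtain ⟨w, hw⟩ := hsur (s x)
    have h4 := horth w
    rw [hw, inner_self_eq_zero] at h4
    have := hsn x
    rw [h4, norm_zero] at this
    exact hR.ne this
  have hfin : ∫ x in B, (ContinuousLinearMap.id ℝ E + (1:ℝ) • fderiv ℝ u x).det ∂μ = (μ B).toReal := by
    have h1 : ∀ x, (ContinuousLinearMap.id ℝ E + (1:ℝ) • fderiv ℝ u x).det =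
        ∑ t ∈ N, (Lagrange.basis N id t).eval 1 *
          (ContinuousLinearMap.id ℝ E + t • fderiv ℝ u x).det := by
      intro x
      have := det_interp N (by omega) (fderiv ℝ u x : E →ₗ[ℝ] E)
      simpa [ContinuousLinearMap.det] using this
    simp_rw [h1]
    rw [MeasureTheory.integral_finsetSum]
    · have h2 : ∀ t ∈ N, ∫ x in B, (Lagrange.basis N id t).eval 1 *
          (ContinuousLinearMap.id ℝ E + t • fderiv ℝ u x).det ∂μ
          = (Lagrange.basis N id t).eval 1 * (μ B).toReal := by
        intro t ht
        rw [MeasureTheory.integral_const_mul, hN ht]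
      rw [Finset.sum_congr rfl h2, ← Finset.sum_mul]
      have h3 := congrArg (Polynomial.eval 1) (Lagrange.sum_basis (s := N) (v := id) (injOn_id _)
        (Finset.card_pos.1 (by omega)))
      rw [Polynomial.eval_finsetSum] at h3
      rw [h3]; simp
    · intro t _
      exact (hint t).const_mul _
  simp only [hdet0, MeasureTheory.integral_zero] at hfin
  have hpos' : 0 < μ B := measure_closedBall_pos μ 0 hR
  have hlt : μ B < ⊤ := hBc.measure_lt_top
  have := ENNReal.toReal_pos hpos'.ne' hlt.ne
  linarith

lemma no_nonvanishing_inner {E : Type*} [NormedAddCommGroup E] [InnerProductSpace ℝ E]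
    [FiniteDimensional ℝ E] (J : E → E) (hJ : Continuous J) (hne : ∀ x, J x ≠ 0) (R : ℝ)
    (hR0 : 0 < R)
    (hR : ∀ x, R ≤ ‖x‖ → ∀ c : ℝ, 0 < c → J x ≠ -(c • x)) : False := by
  set c1 : E → ℝ := fun x => max 0 (min 1 (R + 1 - ‖x‖)) with hc1
  set J2 : E → E := fun x => c1 x • J x + (1 - c1 x) • x with hJ2
  have hc1c : Continuous c1 := by fun_prop
  have hJ2c : Continuous J2 := by fun_prop
  have hfar : ∀ x, R + 1 ≤ ‖x‖ → J2 x = x := by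
    intro x hx
    have : c1 x = 0 := by
      simp only [hc1]; rw [max_eq_left]; exact (min_le_right _ _).trans (by linarith)
    simp [hJ2, this]
  have hJ2ne : ∀ x, J2 x ≠ 0 := by
    intro x h0
    by_cases h1 : R + 1 ≤ ‖x‖
    · rw [hfar x h1] at h0; rw [h0, norm_zero] at h1; linarith
    by_cases h2 : R ≤ ‖x‖
    · have hpos : 0 < c1 x := by
        simp only [hc1]; exact lt_max_of_lt_right (lt_min one_pos (by linarith))
      have hle : c1 x ≤ 1 := by
        simp only [hc1]; exact max_le zero_le_one (min_le_left _ _)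
      have hx : J x = -(((1 - c1 x) / c1 x) • x) := by
        have h3 : c1 x • J x = -((1 - c1 x) • x) := eq_neg_of_add_eq_zero_left h0
        have h4 : J x = (c1 x)⁻¹ • (c1 x • J x) := by
          rw [smul_smul, inv_mul_cancel₀ hpos.ne', one_smul]
        rw [h4, h3, smul_neg, smul_smul]; congr 2; field_simp
      rcases hle.eq_or_lt with h5 | h5
      · rw [h5] at hx; simp at hx; exact hne x hx
      · exact hR x h2 _ (div_pos (by linarith) hpos) hx
    · have : c1 x = 1 := by
        simp only [hc1]; rw [min_eq_left (by linarith)]; simp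
      simp [hJ2, this] at h0
      exact hne x h0
  obtain ⟨g, hg, hgd, hgS, -⟩ := hJ2c.exists_contDiff_approx_and_eqOn 1 (ε := fun x => ‖J2 x‖)
    hJ2c.norm (fun x => norm_pos_iff.2 (hJ2ne x)) (S := {x | R + 2 ≤ ‖x‖}) (U := {x | R + 1 < ‖x‖})
    (isClosed_le continuous_const continuous_norm)
    ((isOpen_lt continuous_const continuous_norm).mem_nhdsSet.2 fun x (hx : R + 2 ≤ ‖x‖) => by
      change R + 1 < ‖x‖; linarith)
    (contDiff_id.contDiffOn.congr fun x (hx : R + 1 < ‖x‖) => hfar x hx.le)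
  have hgne : ∀ x, g x ≠ 0 := by
    intro x hx
    have := hgd x
    rw [hx, dist_zero_left] at this
    exact lt_irrefl _ this
  refine no_smooth_retraction (R := R + 2) (by linarith) (fun x => (R + 2) • (‖g x‖⁻¹ • g x)) ?_ ?_ ?_
  · have hg' : ContDiff ℝ 1 g := by exact_mod_cast hg
    exact contDiff_const.smul (((hg'.norm ℝ hgne).inv fun x => norm_ne_zero_iff.2 (hgne x)).smul hg')
  · intro x
    rw [norm_smul, norm_smul, norm_inv, norm_norm, inv_mul_cancel₀ (norm_ne_zero_iff.2 (hgne x)),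
      mul_one, Real.norm_of_nonneg (by linarith)]
  · intro x hx
    have h1 : g x = x := by
      rw [hgS (show R + 2 ≤ ‖x‖ from hx.ge), hfar x (by linarith)]
    simp only [h1, hx]
    rw [smul_smul, mul_inv_cancel₀ (by linarith), one_smul]

/-- A topological form of Brouwer's theorem. -/
lemma no_nonvanishing {E : Type*} [NormedAddCommGroup E] [NormedSpace ℝ E]
    [FiniteDimensional ℝ E] (J : E → E) (hJ : Continuous J) (hne : ∀ x, J x ≠ 0) (R : ℝ)
    (hR : ∀ x, R ≤ ‖x‖ → ∀ c : ℝ, 0 < c → J x ≠ -(c • x)) : False := by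
  let T : E ≃L[ℝ] EuclideanSpace ℝ (Fin (Module.finrank ℝ E)) := toEuclidean
  have hb : Bornology.IsBounded (T '' closedBall 0 R) :=
    ((isCompact_closedBall (0:E) R).image T.continuous).isBounded
  obtain ⟨r, hr⟩ := hb.subset_ball 0
  refine no_nonvanishing_inner (fun x => T (J (T.symm x))) (by fun_prop) (fun x => ?_) (max r 1)
    (by positivity) fun x hx c hc h => ?_
  · simpa using hne (T.symm x)
  · refine hR (T.symm x) ?_ c hc ?_
    · by_contra hcon
      have : T (T.symm x) ∈ ball 0 r := hr ⟨_, by simpa using (not_le.1 hcon).le, rfl⟩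
      simp at this
      exact absurd ((le_max_left _ _).trans hx) (not_le.2 this)
    · apply T.injective; simpa using h

/-- The collapse map of the unit ball onto a sphere-like set. -/
noncomputable def colMap {E : Type*} [NormedAddCommGroup E] [NormedSpace ℝ E] (w : E) : E × ℝ :=
  (max 0 (1 - ‖w‖) • w, min (2 * ‖w‖ - 1) 1)

lemma colMap_continuous {E : Type*} [NormedAddCommGroup E] [NormedSpace ℝ E] :
    Continuous (colMap : E → E × ℝ) := by
  unfold colMap; fun_prop

lemma colMap_far {E : Type*} [NormedAddCommGroup E] [NormedSpace ℝ E] {w : E} (h : 1 ≤ ‖w‖) :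
    colMap w = (0, 1) := by
  unfold colMap
  rw [max_eq_left (by linarith), min_eq_right (by linarith), zero_smul]

lemma colMap_ne {E : Type*} [NormedAddCommGroup E] [NormedSpace ℝ E] (w : E) :
    colMap w ≠ 0 := by
  by_cases h : 1 ≤ ‖w‖
  · rw [colMap_far h]; simp
  intro h0
  unfold colMap at h0
  rw [Prod.mk_eq_zero] at h0
  obtain ⟨h1, h2⟩ := h0
  push Not at h
  rw [max_eq_right (by linarith), smul_eq_zero] at h1
  rcases h1 with h1 | h1
  · linarith
  · rw [h1, norm_zero] at h2; norm_num at h2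

lemma exists_push {E B : Type*} [NormedAddCommGroup E] [NormedSpace ℝ E] [FiniteDimensional ℝ E]
    [NormedAddCommGroup B] [NormedSpace ℝ B] [FiniteDimensional ℝ B]
    (hdim : Module.finrank ℝ E < Module.finrank ℝ B) {ρ : ℝ} (hρ : 0 < ρ)
    (β : E → B) (hβ : Continuous β) :
    ∃ β1 : E → B, Continuous β1 ∧ (∀ y, ‖β1 y‖ = ρ) ∧ ∀ y, ‖β y‖ = ρ → ‖β1 y - β y‖ ≤ ρ / 2 := by
  obtain ⟨g, hg, hgd, -⟩ := hβ.exists_contDiff_approx 1 (ε := fun _ => ρ / 8) continuous_const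
    (fun _ => by positivity)
  have hg' : ContDiff ℝ 1 g := by exact_mod_cast hg
  obtain ⟨v, hv1, hv2⟩ := (hg'.dense_compl_range_of_finrank_lt_finrank hdim).exists_mem_open
    (isOpen_ball (x := (0:B)) (ε := ρ / 8)) ⟨0, by simpa using hρ⟩
  have hne : ∀ y, g y - v ≠ 0 := fun y h => hv1 ⟨y, sub_eq_zero.1 h⟩
  have hc : Continuous fun y => g y - v := hg'.continuous.sub continuous_const
  have hnorm : ∀ y, ‖ρ • (‖g y - v‖⁻¹ • (g y - v))‖ = ρ := by
    intro y
    rw [norm_smul, norm_smul, norm_inv, norm_norm, inv_mul_cancel₀ (norm_ne_zero_iff.2 (hne y)),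
      mul_one, Real.norm_of_nonneg hρ.le]
  refine ⟨fun y => ρ • (‖g y - v‖⁻¹ • (g y - v)), ?_, hnorm, ?_⟩
  · exact ((hc.norm.inv₀ fun y => norm_ne_zero_iff.2 (hne y)).smul hc).const_smul ρ
  · intro y hy
    have h1 : ‖(g y - v) - β y‖ ≤ ρ / 4 := by
      have h2 := (hgd y).le
      rw [dist_eq_norm] at h2
      have h3 : ‖v‖ ≤ ρ / 8 := (mem_ball_zero_iff.1 hv2).le
      calc ‖(g y - v) - β y‖ = ‖(g y - β y) - v‖ := by congr 1; abel
        _ ≤ ‖g y - β y‖ + ‖v‖ := norm_sub_le _ _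
        _ ≤ ρ / 4 := by linarith
    have h4 : ‖ρ • (‖g y - v‖⁻¹ • (g y - v)) - (g y - v)‖ ≤ ρ / 4 := by
      have hn : 0 < ‖g y - v‖ := norm_pos_iff.2 (hne y)
      have : ρ • (‖g y - v‖⁻¹ • (g y - v)) - (g y - v) = ((ρ - ‖g y - v‖) / ‖g y - v‖) • (g y - v) := by
        rw [smul_smul, sub_div, div_self hn.ne', sub_smul, one_smul, div_eq_mul_inv]
      rw [this, norm_smul, norm_div, norm_norm, div_mul_cancel₀ _ hn.ne', ← hy]
      have h5 := abs_norm_sub_norm_le (β y) (g y - v)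
      rw [Real.norm_eq_abs]
      refine h5.trans ?_
      rw [norm_sub_rev, hy]; exact h1
    calc _ = ‖(ρ • (‖g y - v‖⁻¹ • (g y - v)) - (g y - v)) + ((g y - v) - β y)‖ := by congr 1; abel
      _ ≤ _ := norm_add_le _ _
      _ ≤ ρ / 2 := by linarith

/-- The topological core: a linking obstruction. -/
lemma core {A B E : Type*} [NormedAddCommGroup A] [NormedSpace ℝ A] [FiniteDimensional ℝ A]
    [NormedAddCommGroup B] [NormedSpace ℝ B] [FiniteDimensional ℝ B]
    [NormedAddCommGroup E] [NormedSpace ℝ E] [FiniteDimensional ℝ E]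
    (hdim : Module.finrank ℝ E < Module.finrank ℝ B) {ρ : ℝ} (hρ : 0 < ρ)
    {K : Set E} (hK : IsCompact K) (e : E → A × B) (he : ContinuousOn e K)
    (heQ : ∀ y ∈ K, ‖e y‖ ≤ ρ) (hfr : ∀ y ∈ frontier K, ‖(e y).2‖ = ρ)
    {C O : Set (A × B)} (hC : IsCompact C) (hO : IsOpen O) (hCO : C ⊆ O) (Θ : A × B → E)
    (hΘ : ContinuousOn Θ (O ∩ closedBall 0 ρ))
    (hzero : ∀ x ∈ O, ‖x‖ ≤ ρ → (Θ x = 0 ↔ x ∈ C))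
    (hCb : ∀ x ∈ C, ‖x.2‖ < ρ / 2) (heC : ∀ y ∈ K, e y ∈ C → y = 0)
    (h0 : (0:E) ∈ K) (he0 : e 0 ∈ C) {c : ℝ} (hc : 0 < c)
    (hlin : ∀ᶠ y in nhds (0:E), Θ (e y) = c • y) : False := by
  classical
  obtain ⟨σ, hσ, hσlin⟩ := Metric.eventually_nhds_iff.1 hlin
  -- the open set
  have hKσ : IsCompact (e '' (K \ ball 0 σ)) :=
    (hK.diff isOpen_ball).image_of_continuousOn (he.mono sdiff_subset)
  obtain ⟨L, hL, hCL, hLO⟩ := exists_compact_between hC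
    ((hO.inter (isOpen_lt (continuous_snd.norm) continuous_const)).inter hKσ.isClosed.isOpen_compl :
      IsOpen ((O ∩ {x : A × B | ‖x.2‖ < ρ / 2}) ∩ (e '' (K \ ball 0 σ))ᶜ))
    (by
      intro x hx
      refine ⟨⟨hCO hx, hCb x hx⟩, ?_⟩
      rintro ⟨y, ⟨hy, hyσ⟩, rfl⟩
      rw [heC y hy hx] at hyσ
      exact hyσ (mem_ball_self hσ))
  have hLO' : L ⊆ O := fun x hx => (hLO hx).1.1
  have hLb : ∀ x ∈ L, ‖x.2‖ < ρ / 2 := fun x hx => (hLO hx).1.2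
  have hLσ : ∀ y ∈ K, e y ∈ L → ‖y‖ < σ := by
    intro y hy hyL
    by_contra hcon
    exact (hLO hyL).2 ⟨y, ⟨hy, by simpa using hcon⟩, rfl⟩
  have hfrL : frontier L ⊆ L := hL.isClosed.frontier_subset
  obtain ⟨d, hd, hdle⟩ := ((hL.of_isClosed_subset isClosed_frontier hfrL).inter
    (isCompact_closedBall (0 : A × B) ρ)).exists_forall_le' (f := fun x => ‖Θ x‖) (a := 0)
    (hΘ.mono (inter_subset_inter_left _ (hfrL.trans hLO'))).norm (by
      rintro x ⟨hx, hxρ⟩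
      rw [norm_pos_iff]
      intro h
      have := (hzero x (hLO' (hfrL hx)) (by simpa using hxρ)).1 h
      exact hx.2 (hCL this))
  set Jh : A × B → E × ℝ := L.piecewise (fun x => colMap (d⁻¹ • Θ x)) (fun _ => (0, 1)) with hJh
  have hJhc : ContinuousOn Jh (closedBall 0 ρ) := by
    refine ContinuousOn.piecewise ?_ ?_ continuousOn_const
    · rintro x ⟨hx, hxL⟩
      apply colMap_far
      rw [norm_smul, norm_inv, Real.norm_of_nonneg hd.le]
      have := hdle x ⟨hxL, hx⟩
      rw [inv_mul_eq_div, le_div_iff₀ hd]; simpa using this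
    · rw [hL.isClosed.closure_eq]
      refine colMap_continuous.comp_continuousOn ((hΘ.mono ?_).const_smul d⁻¹)
      exact fun x hx => ⟨hLO' hx.2, hx.1⟩
  have hJhne : ∀ x, Jh x ≠ 0 := by
    intro x
    by_cases hx : x ∈ L
    · rw [hJh, piecewise_eq_of_mem _ _ _ hx]; exact colMap_ne _
    · rw [hJh, piecewise_eq_of_notMem _ _ _ hx]; simp
  -- Tietze extension
  obtain ⟨βc, hβc⟩ := ContinuousMap.exists_restrict_eq hK.isClosed
    (⟨fun y : K => (e y).2, (continuousOn_iff_continuous_domRestrict.1 he).snd⟩ : C(K, B))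
  have hβ : ∀ y ∈ K, βc y = (e y).2 := fun y hy => by
    have := congrArg (fun h : C(K, B) => h ⟨y, hy⟩) hβc
    exact this
  obtain ⟨β1, hβ1c, hβ1n, hβ1⟩ := exists_push hdim hρ βc βc.continuous
  set τ : ℝ → ℝ := fun t => max 0 (min 1 (t + 1 / 2)) with hτ
  have hτ0 : ∀ t, 0 ≤ τ t := fun t => le_max_left _ _
  have hτ1 : ∀ t, τ t ≤ 1 := fun t => max_le zero_le_one (min_le_left _ _)
  set Φ : E × ℝ → A × B := fun q => ((e q.1).1, (1 - τ q.2) • βc q.1 + τ q.2 • β1 q.1) with hΦ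
  have hΦQ : ∀ q : E × ℝ, q.1 ∈ K → Φ q ∈ closedBall 0 ρ := by
    intro q hq
    have h1 := heQ _ hq
    rw [Prod.norm_def] at h1
    rw [mem_closedBall_zero_iff, Prod.norm_def]
    refine max_le ((le_max_left _ _).trans h1) ?_
    have h2 : ‖βc q.1‖ ≤ ρ := by rw [hβ _ hq]; exact (le_max_right _ _).trans h1
    calc ‖(1 - τ q.2) • βc q.1 + τ q.2 • β1 q.1‖
        ≤ ‖(1 - τ q.2) • βc q.1‖ + ‖τ q.2 • β1 q.1‖ := norm_add_le _ _
      _ = (1 - τ q.2) * ‖βc q.1‖ + τ q.2 * ρ := by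
          rw [norm_smul, norm_smul, hβ1n, Real.norm_of_nonneg (hτ0 _),
            Real.norm_of_nonneg (by linarith [hτ1 q.2])]
      _ ≤ (1 - τ q.2) * ρ + τ q.2 * ρ := by
          have := hτ1 q.2
          gcongr
      _ = ρ := by ring
  have hΦc : ContinuousOn Φ (K ×ˢ univ) := by
    have hτc : Continuous τ := by fun_prop
    have h1 : ContinuousOn (fun q : E × ℝ => (e q.1).1) (K ×ˢ univ) :=
      (he.comp continuousOn_fst (fun q hq => hq.1)).fst
    refine h1.prodMk (Continuous.continuousOn ?_)
    have := βc.continuous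
    fun_prop
  set J : E × ℝ → E × ℝ := (K ×ˢ univ).piecewise (fun q => Jh (Φ q)) (fun _ => (0, 1)) with hJ
  have hJin : ∀ q : E × ℝ, q.1 ∈ K → J q = Jh (Φ q) := fun q hq =>
    piecewise_eq_of_mem _ _ _ ⟨hq, mem_univ _⟩
  have hJout : ∀ q : E × ℝ, q.1 ∉ K → J q = (0, 1) := fun q hq =>
    piecewise_eq_of_notMem _ _ _ (fun h => hq h.1)
  have hJc : Continuous J := by
    rw [← continuousOn_univ]
    refine ContinuousOn.piecewise ?_ ?_ continuousOn_const
    · rintro q ⟨-, hq⟩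
      rw [frontier_prod_univ_eq] at hq
      have hq1 := hq.1
      have hqK : q.1 ∈ K := hK.isClosed.frontier_subset hq1
      have hb : ‖βc q.1‖ = ρ := by rw [hβ _ hqK]; exact hfr _ hq1
      have h2 := hβ1 _ hb
      apply piecewise_eq_of_notMem
      intro hcon
      have h3 := hLb _ hcon
      have h4 : (Φ q).2 = βc q.1 + τ q.2 • (β1 q.1 - βc q.1) := by
        simp only [hΦ]; module
      have h5 : ‖τ q.2 • (β1 q.1 - βc q.1)‖ ≤ ρ / 2 := by
        rw [norm_smul, Real.norm_of_nonneg (hτ0 _)]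
        calc _ ≤ 1 * ‖β1 q.1 - βc q.1‖ := by gcongr; exact hτ1 _
          _ ≤ ρ / 2 := by linarith
      have h6 : ρ ≤ ‖(Φ q).2‖ + ρ / 2 := by
        calc ρ = ‖(Φ q).2 - τ q.2 • (β1 q.1 - βc q.1)‖ := by rw [h4, add_sub_cancel_right, hb]
          _ ≤ _ := norm_sub_le _ _
          _ ≤ _ := by gcongr
      linarith
    · rw [(hK.isClosed.prod isClosed_univ).closure_eq, univ_inter]
      exact hJhc.comp hΦc fun q hq => hΦQ q hq.1
  obtain ⟨r, hr⟩ := hK.isBounded.subset_ball 0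
  refine no_nonvanishing J hJc (fun q => ?_) (max r 1) ?_
  · by_cases hq : q.1 ∈ K
    · rw [hJin q hq]; exact hJhne _
    · rw [hJout q hq]; simp
  · rintro ⟨y, t⟩ hq a ha heq
    have hfst : (J (y, t)).1 = -(a • y) := by rw [heq]; rfl
    have hsnd : (J (y, t)).2 = -(a * t) := by rw [heq]; rfl
    have hbot : t ≤ -1 → y ∈ K → J (y, t) = Jh (e y) := by
      intro ht hy
      rw [hJin _ hy]
      congr 1
      have : τ t = 0 := by
        simp only [hτ]; rw [max_eq_left]; exact (min_le_right _ _).trans (by linarith)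
      simp [hΦ, this, hβ y hy]
    have hcase : y ∈ K → r ≤ ‖(y, t)‖ → 1 ≤ ‖(y, t)‖ → 1 ≤ |t| := by
      intro hy h1 h2
      have h3 : ‖y‖ < r := by simpa using hr hy
      rw [Prod.norm_def] at h1 h2
      rcases le_total ‖y‖ ‖t‖ with h4 | h4
      · rw [max_eq_right h4] at h2; simpa using h2
      · rw [max_eq_left h4] at h1; exact absurd h1 (not_le.2 h3)
    have hq1 : r ≤ ‖(y, t)‖ := (le_max_left _ _).trans hq
    have hq2 : 1 ≤ ‖(y, t)‖ := (le_max_right _ _).trans hq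
    -- value at the bottom centre
    have hJhL : ∀ x ∈ L, Jh x = colMap (d⁻¹ • Θ x) := fun x hx => piecewise_eq_of_mem _ _ _ hx
    have hbotL : t ≤ -1 → y ∈ K → e y ∈ L → False := by
      intro ht hy hyL
      have h1 : J (y, t) = colMap (d⁻¹ • (c • y)) := by
        rw [hbot ht hy, hJhL _ hyL, hσlin (by simpa using hLσ y hy hyL)]
      have h2 : (max 0 (1 - ‖d⁻¹ • (c • y)‖) * (d⁻¹ * c) + a) • y = 0 := by
        rw [h1] at hfst
        simp only [colMap] at hfst
        rw [add_smul, mul_smul, mul_smul, hfst]; simp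
      have h3 : 0 < max 0 (1 - ‖d⁻¹ • (c • y)‖) * (d⁻¹ * c) + a := by positivity
      have hy0 : y = 0 := (smul_eq_zero.1 h2).resolve_left h3.ne'
      rw [h1, hy0] at hsnd
      simp [colMap] at hsnd
      nlinarith
    have htriv : J (y, t) = (0, 1) → False := by
      intro h
      rw [h] at hfst hsnd
      simp only at hfst hsnd
      have hy0 : y = 0 := by
        have := hfst.symm
        rw [neg_eq_zero] at this
        exact (smul_eq_zero.1 this).resolve_left ha.ne'
      have hyK : y ∈ K := hy0 ▸ h0
      have ht := hcase hyK hq1 hq2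
      have ht0 : t < 0 := by by_contra hcon; push Not at hcon; nlinarith
      rw [abs_of_neg ht0] at ht
      exact hbotL (by linarith) hyK (by rw [hy0]; exact interior_subset (hCL he0))
    by_cases hy : y ∈ K
    · by_cases hL' : Φ (y, t) ∈ L
      · have ht := hcase hy hq1 hq2
        rcases le_abs.1 ht with ht | ht
        · have h1 : τ t = 1 := by
            simp only [hτ]; rw [min_eq_left (by linarith)]; simp
          have h2 := hLb _ hL'
          simp [hΦ, h1, hβ1n] at h2
          linarith
        · have h1 : Φ (y, t) = e y := by
            have : τ t = 0 := by
              simp only [hτ]; rw [max_eq_left]; exact (min_le_right _ _).trans (by linarith)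
            simp [hΦ, this, hβ y hy]
          rw [h1] at hL'
          exact hbotL (by linarith) hy hL'
      · exact htriv (by rw [hJin _ hy]; exact piecewise_eq_of_notMem _ _ _ hL')
    · exact htriv (hJout _ hy)

section Dyn

/-- `x` stays within `α` of `y` in the future. -/
def Stab {M : Type*} [MetricSpace M] (f : M ≃ₜ M) (α : ℝ) (x y : M) : Prop :=
  ∀ i : ℕ, dist (f^[i] x) (f^[i] y) ≤ α

lemma iter_cont {M : Type*} [MetricSpace M] (f : M ≃ₜ M) (i : ℕ) : Continuous (f^[i]) :=
  f.continuous.iterate i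

lemma symm_iter_iter {M : Type*} [MetricSpace M] (f : M ≃ₜ M) (i : ℕ) (x : M) :
    f.symm^[i] (f^[i] x) = x :=
  (Function.LeftInverse.iterate f.left_inv i) x

lemma iter_symm_iter {M : Type*} [MetricSpace M] (f : M ≃ₜ M) (i : ℕ) (x : M) :
    f^[i] (f.symm^[i] x) = x :=
  (Function.LeftInverse.iterate f.right_inv i) x

lemma stab_closed {M : Type*} [MetricSpace M] (f : M ≃ₜ M) (α : ℝ) (q : M) :
    IsClosed {x | Stab f α x q} := by
  have : {x | Stab f α x q} = ⋂ i : ℕ, {x | dist (f^[i] x) (f^[i] q) ≤ α} := by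
    ext; simp [Stab]
  rw [this]
  exact isClosed_iInter fun i => isClosed_le ((iter_cont f i).dist continuous_const) continuous_const

lemma unif {M : Type*} [MetricSpace M] [CompactSpace M] (f : M ≃ₜ M) {α : ℝ}
    (hE : ∀ x y, Stab f α x y → Stab f.symm α x y → x = y) {η : ℝ} (hη : 0 < η) :
    ∃ N : ℕ, ∀ x y, Stab f α x y → ∀ i, N ≤ i → dist (f^[i] x) (f^[i] y) < η := by
  let S : ℕ → Set (M × M) := fun N => {u | η ≤ dist u.1 u.2 ∧ Stab f α u.1 u.2 ∧
    ∀ j, j ≤ N → dist (f.symm^[j] u.1) (f.symm^[j] u.2) ≤ α}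
  have hcl : ∀ N, IsClosed (S N) := by
    intro N
    have hA : IsClosed {u : M × M | Stab f α u.1 u.2} := by
      have : {u : M × M | Stab f α u.1 u.2} =
          ⋂ i : ℕ, {u : M × M | dist (f^[i] u.1) (f^[i] u.2) ≤ α} := by
        ext; simp [Stab]
      rw [this]
      exact isClosed_iInter fun i => isClosed_le (((iter_cont f i).comp continuous_fst).dist
        ((iter_cont f i).comp continuous_snd)) continuous_const
    have hB : IsClosed {u : M × M | ∀ j, j ≤ N → dist (f.symm^[j] u.1) (f.symm^[j] u.2) ≤ α} := by
      have : {u : M × M | ∀ j, j ≤ N → dist (f.symm^[j] u.1) (f.symm^[j] u.2) ≤ α} =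
          ⋂ j : ℕ, ⋂ _ : j ≤ N, {u : M × M | dist (f.symm^[j] u.1) (f.symm^[j] u.2) ≤ α} := by
        ext; simp
      rw [this]
      exact isClosed_iInter fun i => isClosed_iInter fun _ =>
        isClosed_le (((iter_cont f.symm i).comp continuous_fst).dist
        ((iter_cont f.symm i).comp continuous_snd)) continuous_const
    exact (isClosed_le continuous_const (continuous_fst.dist continuous_snd)).inter (hA.inter hB)
  by_contra hcon
  push Not at hcon
  have hne : ∀ N, (S N).Nonempty := by
    intro N
    obtain ⟨x, y, hxy, i, hi, hd⟩ := hcon N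
    refine ⟨(f^[i] x, f^[i] y), hd, fun k => ?_, fun j hj => ?_⟩
    · simp only [← Function.iterate_add_apply]; exact hxy _
    · obtain ⟨m, rfl⟩ := Nat.exists_eq_add_of_le (hj.trans hi)
      simp only [Function.iterate_add_apply, symm_iter_iter]
      exact hxy m
  obtain ⟨u, hu⟩ := IsCompact.nonempty_iInter_of_sequence_nonempty_isCompact_isClosed S
    (fun N u hu => ⟨hu.1, hu.2.1, fun j hj => hu.2.2 j (by omega)⟩) hne (hcl 0).isCompact hcl
  rw [mem_iInter] at hu
  have h1 : u.1 = u.2 := hE _ _ (hu 0).2.1 fun j => (hu j).2.2 j le_rfl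
  have h2 := (hu 0).1
  rw [h1, dist_self] at h2
  linarith

lemma unif_small {M : Type*} [MetricSpace M] [CompactSpace M] (f : M ≃ₜ M) {α : ℝ}
    (hE : ∀ x y, Stab f α x y → Stab f.symm α x y → x = y) {η : ℝ} (hη : 0 < η) :
    ∃ δ > 0, ∀ x y, Stab f α x y → dist x y < δ → ∀ i, dist (f^[i] x) (f^[i] y) < η := by
  obtain ⟨N, hN⟩ := unif f hE hη
  have h1 : ∀ i : ℕ, ∃ δ > 0, ∀ x y, dist x y < δ → dist (f^[i] x) (f^[i] y) < η := by
    intro i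
    have := CompactSpace.uniformContinuous_of_continuous (iter_cont f i)
    obtain ⟨δ, h, h'⟩ := Metric.uniformContinuous_iff.1 this η hη
    exact ⟨δ, h, fun x y hxy => h' hxy⟩
  have h2 : ∀ n : ℕ, ∃ δ > 0, ∀ x y, dist x y < δ → ∀ i, i < n → dist (f^[i] x) (f^[i] y) < η := by
    intro n
    induction n with
    | zero => exact ⟨1, one_pos, fun _ _ _ i hi => by omega⟩
    | succ n ih =>
      obtain ⟨δ, hδ, h⟩ := ih
      obtain ⟨δ', hδ', h'⟩ := h1 n
      refine ⟨min δ δ', lt_min hδ hδ', fun x y hxy i hi => ?_⟩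
      rcases (Nat.lt_succ_iff_lt_or_eq.1 hi) with h3 | rfl
      · exact h x y (hxy.trans_le (min_le_left _ _)) i h3
      · exact h' x y (hxy.trans_le (min_le_right _ _))
  obtain ⟨δ, hδ, h⟩ := h2 N
  refine ⟨δ, hδ, fun x y hs hd i => ?_⟩
  rcases lt_or_ge i N with hi | hi
  · exact h x y hd i hi
  · exact hN x y hs i hi

variable {M : Type*} [MetricSpace M]
  {A B : Type*} [NormedAddCommGroup A] [NormedSpace ℝ A] [NormedAddCommGroup B] [NormedSpace ℝ B]

/-- A linearizing chart at a periodic point. -/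
structure HChart (f : M ≃ₜ M) (l : ℕ) (q : M) (ψ : OpenPartialHomeomorph M (A × B)) : Prop where
  pos : 1 ≤ l
  per : f^[l] q = q
  mem : q ∈ ψ.source
  zero : ψ q = 0
  conj : ∀ z ∈ ψ.source, f^[l] z ∈ ψ.source →
    ψ (f^[l] z) = ((1 / 2 : ℝ) • (ψ z).1, (2 : ℝ) • (ψ z).2)

/-- Swap the two factors of a chart. -/
def swapChart (ψ : OpenPartialHomeomorph M (A × B)) : OpenPartialHomeomorph M (B × A) :=
  ψ.transHomeomorph (Homeomorph.prodComm A B)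

@[simp] lemma swapChart_apply (ψ : OpenPartialHomeomorph M (A × B)) (z : M) :
    swapChart ψ z = (ψ z).swap := rfl

@[simp] lemma swapChart_source (ψ : OpenPartialHomeomorph M (A × B)) :
    (swapChart ψ).source = ψ.source := rfl

lemma HChart.swap {f : M ≃ₜ M} {l : ℕ} {q : M} {ψ : OpenPartialHomeomorph M (A × B)}
    (h : HChart f l q ψ) : HChart f.symm l q (swapChart ψ) where
  pos := h.pos
  per := by conv_lhs => rw [← h.per, symm_iter_iter]
  mem := h.mem
  zero := by rw [swapChart_apply, h.zero]; rfl
  conj := by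
    intro z hz hz'
    simp only [swapChart_source] at hz hz'
    have h1 := h.conj (f.symm^[l] z) hz' (by rwa [iter_symm_iter])
    rw [iter_symm_iter] at h1
    simp only [swapChart_apply, h1, Prod.swap, smul_smul]
    norm_num

lemma norm_swap' (w : A × B) : ‖w.swap‖ = ‖w‖ := by
  simp only [Prod.norm_def, Prod.fst_swap, Prod.snd_swap, max_comm]

lemma HChart.symm_zero {f : M ≃ₜ M} {l : ℕ} {q : M} {ψ : OpenPartialHomeomorph M (A × B)}
    (h : HChart f l q ψ) : ψ.symm 0 = q := by
  rw [← h.zero, ψ.left_inv h.mem]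

lemma HChart.zero_mem {f : M ≃ₜ M} {l : ℕ} {q : M} {ψ : OpenPartialHomeomorph M (A × B)}
    (h : HChart f l q ψ) : (0 : A × B) ∈ ψ.target := by
  rw [← h.zero]; exact ψ.map_source h.mem

lemma HChart.per_mul {f : M ≃ₜ M} {l : ℕ} {q : M} {ψ : OpenPartialHomeomorph M (A × B)}
    (h : HChart f l q ψ) (j : ℕ) : f^[l * j] q = q := by
  rw [Function.iterate_mul]; exact Function.iterate_fixed h.per j

lemma HChart.nb {f : M ≃ₜ M} {l : ℕ} {q : M} {ψ : OpenPartialHomeomorph M (A × B)}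
    (h : HChart f l q ψ) {W : Set M} (hW : W ∈ nhds q) :
    ∃ s > 0, ball 0 s ⊆ ψ.target ∧ ∀ z ∈ ψ.source, ‖ψ z‖ < s → z ∈ W ∧ f^[l] z ∈ ψ.source := by
  have h1 : ContinuousAt ψ.symm 0 := ψ.symm.continuousAt h.zero_mem
  have h2 : W ∩ f^[l] ⁻¹' ψ.source ∈ nhds (ψ.symm 0) := by
    rw [h.symm_zero]
    refine Filter.inter_mem hW ((iter_cont f l).continuousAt ?_)
    rw [h.per]
    exact ψ.open_source.mem_nhds h.mem
  have h3 := Filter.inter_mem (h1.preimage_mem_nhds h2) (ψ.open_target.mem_nhds h.zero_mem)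
  obtain ⟨s, hs, hsub⟩ := Metric.mem_nhds_iff.1 h3
  refine ⟨s, hs, fun w hw => (hsub hw).2, fun z hz hzs => ?_⟩
  have := (hsub (mem_ball_zero_iff.2 hzs)).1
  rw [mem_preimage, ψ.left_inv hz] at this
  exact this

lemma HChart.stay {f : M ≃ₜ M} {l : ℕ} {q : M} {ψ : OpenPartialHomeomorph M (A × B)}
    (h : HChart f l q ψ) {s : ℝ} (hs : ∀ z ∈ ψ.source, ‖ψ z‖ < s → f^[l] z ∈ ψ.source)
    {z : M} (hz : z ∈ ψ.source) (hzs : ‖ψ z‖ < s) (hz2 : (ψ z).2 = 0) (j : ℕ) :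
    f^[l * j] z ∈ ψ.source ∧ ‖ψ (f^[l * j] z)‖ < s ∧ (ψ (f^[l * j] z)).2 = 0 := by
  induction j with
  | zero => exact ⟨hz, hzs, hz2⟩
  | succ j ih =>
    obtain ⟨h1, h2, h3⟩ := ih
    have h4 := hs _ h1 h2
    have h5 := h.conj _ h1 h4
    rw [Nat.mul_succ, Nat.add_comm, Function.iterate_add_apply]
    refine ⟨h4, ?_, ?_⟩
    · rw [h5, h3]
      refine lt_of_le_of_lt ?_ h2
      rw [Prod.norm_def, Prod.norm_def, smul_zero, norm_zero]
      refine max_le ?_ ((norm_nonneg _).trans (le_max_left _ _))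
      refine le_trans ?_ (le_max_left _ _)
      rw [norm_smul]
      have := norm_nonneg (ψ (f^[l * j] z)).1
      norm_num
      linarith
    · rw [h5, h3]; simp

lemma HChart.zero_of_stay {f : M ≃ₜ M} {l : ℕ} {q : M} {ψ : OpenPartialHomeomorph M (A × B)}
    (h : HChart f l q ψ) {s : ℝ} {z : M}
    (hs : ∀ j : ℕ, f^[l * j] z ∈ ψ.source ∧ ‖ψ (f^[l * j] z)‖ < s) : (ψ z).2 = 0 := by
  have h1 : ∀ j : ℕ, (ψ (f^[l * j] z)).2 = (2 : ℝ) ^ j • (ψ z).2 := by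
    intro j
    induction j with
    | zero => simp
    | succ j ih =>
      have h4 := (hs (j + 1)).1
      rw [Nat.mul_succ, Nat.add_comm, Function.iterate_add_apply] at h4 ⊢
      rw [h.conj _ (hs j).1 h4]
      simp only [ih, smul_smul, pow_succ, mul_comm]
  by_contra hne
  have hpos : 0 < ‖(ψ z).2‖ := norm_pos_iff.2 hne
  obtain ⟨j, hj⟩ := pow_unbounded_of_one_lt (s / ‖(ψ z).2‖) (one_lt_two : (1:ℝ) < 2)
  have h2 := (hs j).2
  rw [Prod.norm_def] at h2
  have h3 := (le_max_right _ _).trans_lt h2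
  rw [h1 j, norm_smul, norm_pow] at h3
  norm_num at h3
  rw [div_lt_iff₀ hpos] at hj
  linarith

lemma HChart.lin {f : M ≃ₜ M} {l : ℕ} {q : M} {ψ : OpenPartialHomeomorph M (A × B)}
    (h : HChart f l q ψ) (j : ℕ) :
    ∀ᶠ z in nhds q, (ψ (f^[l * j] z)).2 = (2 : ℝ) ^ j • (ψ z).2 := by
  have hsrc : ∀ j : ℕ, ∀ᶠ z in nhds q, f^[l * j] z ∈ ψ.source := by
    intro j
    refine (iter_cont f (l * j)).continuousAt.eventually ?_
    rw [h.per_mul]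
    exact ψ.open_source.mem_nhds h.mem
  induction j with
  | zero => simp
  | succ j ih =>
    filter_upwards [ih, hsrc j, hsrc (j + 1)] with z h1 h2 h3
    rw [Nat.mul_succ, Nat.add_comm, Function.iterate_add_apply] at h3 ⊢
    rw [h.conj _ h2 h3]
    simp only [h1, smul_smul, pow_succ, mul_comm]

lemma HChart.local_stable [CompactSpace M] {f : M ≃ₜ M} {l : ℕ} {q : M}
    {ψ : OpenPartialHomeomorph M (A × B)}
    (h : HChart f l q ψ) {α : ℝ} (hα : 0 < α)
    (hE : ∀ x y, Stab f α x y → Stab f.symm α x y → x = y) :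
    ∃ (N : ℕ) (s : ℝ) (O : Set M), 0 < s ∧ ball 0 s ⊆ ψ.target ∧ IsOpen O ∧
      (∀ x ∈ O, f^[l * N] x ∈ ψ.source) ∧
      (∀ x, Stab f (α / 2) x q → x ∈ O) ∧
      (∀ x ∈ O, (ψ (f^[l * N] x)).2 = 0 → Stab f α x q) ∧
      (∀ x, Stab f α x q → f^[l * N] x ∈ ψ.source ∧ ‖ψ (f^[l * N] x)‖ < s ∧
        (ψ (f^[l * N] x)).2 = 0) := by
  have hWo : ∀ n : ℕ, IsOpen {z | ∀ i, i < n → dist (f^[i] z) (f^[i] q) < α} := by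
    intro n
    have : {z | ∀ i, i < n → dist (f^[i] z) (f^[i] q) < α} =
        ⋂ i ∈ Finset.range n, {z | dist (f^[i] z) (f^[i] q) < α} := by ext; simp
    rw [this]
    exact isOpen_biInter_finset fun i _ =>
      isOpen_lt ((iter_cont f i).dist continuous_const) continuous_const
  obtain ⟨s, hs, hst, hsW⟩ := h.nb ((hWo l).mem_nhds (fun i _ => by simpa using hα))
  have hnh : ψ.source ∩ ψ ⁻¹' ball 0 s ∈ nhds q :=
    (ψ.isOpen_inter_preimage isOpen_ball).mem_nhds ⟨h.mem, by simp [h.zero, hs]⟩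
  obtain ⟨η, hη, hηs⟩ := Metric.mem_nhds_iff.1 hnh
  obtain ⟨N, hN⟩ := unif f hE hη
  have hS3 : ∀ x, Stab f α x q → ∀ j, N ≤ j → f^[l * j] x ∈ ψ.source ∧ ‖ψ (f^[l * j] x)‖ < s := by
    intro x hx j hj
    have h1 := hN x q hx (l * j) (hj.trans (Nat.le_mul_of_pos_left _ h.pos))
    rw [h.per_mul] at h1
    have h2 := hηs (mem_ball.2 h1)
    exact ⟨h2.1, by simpa using h2.2⟩
  have hS3' : ∀ x, Stab f α x q → f^[l * N] x ∈ ψ.source ∧ ‖ψ (f^[l * N] x)‖ < s ∧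
      (ψ (f^[l * N] x)).2 = 0 := by
    intro x hx
    refine ⟨(hS3 x hx N le_rfl).1, (hS3 x hx N le_rfl).2, h.zero_of_stay (s := s) fun j => ?_⟩
    rw [← Function.iterate_add_apply, ← Nat.mul_add]
    exact hS3 x hx _ (by omega)
  refine ⟨N, s, {z | ∀ i, i < l * N → dist (f^[i] z) (f^[i] q) < α} ∩
    f^[l * N] ⁻¹' (ψ.source ∩ ψ ⁻¹' ball 0 s), hs, hst, ?_, ?_, ?_, ?_, hS3'⟩
  · exact (hWo _).inter ((ψ.isOpen_inter_preimage isOpen_ball).preimage (iter_cont f _))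
  · exact fun x hx => hx.2.1
  · intro x hx
    have h1 := hS3' x fun i => (hx i).trans (by linarith)
    exact ⟨fun i _ => (hx i).trans_lt (by linarith), h1.1, by simpa using h1.2.1⟩
  · rintro x ⟨hx1, hx2, hx3⟩ hx0 i
    rcases lt_or_ge i (l * N) with hi | hi
    · exact (hx1 i hi).le
    obtain ⟨k, rfl⟩ := Nat.exists_eq_add_of_le hi
    have hk : k % l + l * (k / l) = k := Nat.mod_add_div k l
    have h1 := h.stay (fun z hz hzs => (hsW z hz hzs).2) hx2 (by simpa using hx3) hx0 (k / l)
    have h2 := (hsW _ h1.1 h1.2.1).1 (k % l) (Nat.mod_lt _ h.pos)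
    rw [Nat.add_comm, Function.iterate_add_apply, Function.iterate_add_apply, h.per_mul, ← hk,
      Function.iterate_add_apply, Function.iterate_add_apply, h.per_mul]
    exact h2.le

lemma HChart.side [CompactSpace M] {f : M ≃ₜ M} {l : ℕ} {p : M}
    {φ : OpenPartialHomeomorph M (A × B)}
    (h : HChart f l p φ) {α : ℝ} (hα : 0 < α)
    (hE : ∀ x y, Stab f α x y → Stab f.symm α x y → x = y) :
    ∃ ρ > 0, (∀ x ∈ φ.source, ‖φ x‖ < ρ → ∀ y ∈ φ.source, ‖φ y‖ < ρ → Stab f α x y →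
        Stab f (α / 2) x y) ∧
      (∀ x ∈ φ.source, ‖φ x‖ < ρ → Stab f α x p → (φ x).2 = 0) := by
  obtain ⟨δ, hδ, hδ'⟩ := unif_small f hE (half_pos hα)
  have hnh : φ.source ∩ φ ⁻¹' ball 0 1 ∈ nhds p :=
    (φ.isOpen_inter_preimage isOpen_ball).mem_nhds ⟨h.mem, by simp [h.zero]⟩
  obtain ⟨η, hη, hηs⟩ := Metric.mem_nhds_iff.1 hnh
  obtain ⟨δ1, hδ1, hδ1'⟩ := unif_small f hE hη
  have hmin : 0 < min (δ / 2) δ1 := lt_min (half_pos hδ) hδ1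
  obtain ⟨ρ, hρ, -, hρW⟩ := h.nb (Metric.ball_mem_nhds p hmin)
  refine ⟨ρ, hρ, fun x hx hxρ y hy hyρ hst i => ?_, fun x hx hxρ hst => ?_⟩
  · have h1 := mem_ball.1 (hρW x hx hxρ).1
    have h2 := mem_ball.1 (hρW y hy hyρ).1
    have h3 := min_le_left (δ / 2) δ1
    have h4 := dist_triangle_right x y p
    exact (hδ' x y hst (by linarith) i).le
  · have h1 := mem_ball.1 (hρW x hx hxρ).1
    refine h.zero_of_stay (s := 1) fun j => ?_
    have h2 := hδ1' x p hst (h1.trans_le (min_le_right _ _)) (l * j)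
    rw [h.per_mul] at h2
    have h3 := hηs (mem_ball.2 h2)
    exact ⟨h3.1, by simpa using h3.2⟩

lemma near {f : M ≃ₜ M} {p : M} {φ : OpenPartialHomeomorph M (A × B)} {α η : ℝ}
    {X : Set M} (hX : IsCompact X) (hXs : X ⊆ φ.source)
    (hb : ∀ x ∈ X, Stab f α x p → (φ x).2 = 0) (hη : 0 < η) :
    ∀ᶠ q in nhds p, ∀ x ∈ X, Stab f α x q → ‖(φ x).2‖ < η := by
  apply hX.eventually_forall_of_forall_eventually
  intro x hx
  by_cases hst : Stab f α x p
  · have h1 : ContinuousAt (fun z : M × M => ‖(φ z.2).2‖) (p, x) := by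
      have : ContinuousAt φ x := φ.continuousAt (hXs hx)
      have h2 : ContinuousAt (fun z : M × M => φ z.2) (p, x) :=
        ContinuousAt.comp (f := Prod.snd) (x := (p, x)) this continuousAt_snd
      exact h2.snd.norm
    filter_upwards [h1.eventually (gt_mem_nhds
      (show ‖(φ x).2‖ < η by rw [hb x hx hst]; simpa using hη))]
      with z hz _ using hz
  · simp only [Stab, not_forall, not_le] at hst
    obtain ⟨i, hi⟩ := hst
    have h1 : ContinuousAt (fun z : M × M => dist (f^[i] z.2) (f^[i] z.1)) (p, x) :=
      (((iter_cont f i).comp continuous_snd).dist ((iter_cont f i).comp continuous_fst)).continuousAt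
    filter_upwards [h1.eventually (lt_mem_nhds hi)] with z hz hs
    exact absurd (hs i) (not_le.2 hz)

end Dyn

section Contra

variable {M : Type*} [MetricSpace M]

lemma contra_link [CompactSpace M]
    {A B A' E : Type*} [NormedAddCommGroup A] [NormedSpace ℝ A] [FiniteDimensional ℝ A]
    [NormedAddCommGroup B] [NormedSpace ℝ B] [FiniteDimensional ℝ B]
    [NormedAddCommGroup A'] [NormedSpace ℝ A']
    [NormedAddCommGroup E] [NormedSpace ℝ E] [FiniteDimensional ℝ E]
    (hdim : Module.finrank ℝ E < Module.finrank ℝ B)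
    {f : M ≃ₜ M} {α : ℝ} (hα : 0 < α)
    (hE : ∀ x y, Stab f α x y → Stab f.symm α x y → x = y)
    {φ : OpenPartialHomeomorph M (A × B)} {l : ℕ} {q : M}
    {ψ : OpenPartialHomeomorph M (A' × E)} (hψ : HChart f l q ψ)
    {ρ : ℝ} (hρ : 0 < ρ) (htar : closedBall 0 ρ ⊆ φ.target)
    (haf : ∀ x ∈ φ.source, ‖φ x‖ ≤ ρ → Stab f α x q → Stab f (α / 2) x q)
    (hab : ∀ x ∈ φ.source, ‖φ x‖ ≤ ρ → Stab f.symm α x q → Stab f.symm (α / 2) x q)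
    (hqs : q ∈ φ.source) (hq : ‖φ q‖ < ρ)
    (hs : ∀ x ∈ φ.source, ‖φ x‖ ≤ ρ → Stab f α x q → ‖(φ x).2‖ < ρ / 2)
    (hu : ∀ x ∈ φ.source, ‖φ x‖ ≤ ρ → Stab f.symm α x q → ‖(φ x).1‖ < ρ) : False := by
  obtain ⟨N, s, OS, -, -, hOS, hS0, hS1, hS2, hS3⟩ := hψ.local_stable hα hE
  obtain ⟨N', s', OU, hs', hsb, hOU, hU0, hU1, hU2, hU3⟩ :=
    hψ.swap.local_stable hα (fun x y a b => hE x y b a)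
  simp only [swapChart_apply, swapChart_source, Prod.snd_swap, norm_swap'] at hU0 hU2 hU3
  have htψ : ∀ y : E, ‖y‖ < s' → ((0 : A'), y) ∈ ψ.target := by
    intro y hy
    have h1 : ((y, 0) : E × A') ∈ ball (0 : E × A') s' := by
      rw [mem_ball_zero_iff, Prod.norm_def]
      exact max_lt hy (by simpa using hs')
    exact hsb h1
  set X : Set M := {x | x ∈ φ.source ∧ ‖φ x‖ ≤ ρ} with hXdef
  have hXc : IsCompact X := by
    have : X = φ.symm '' closedBall 0 ρ := by
      ext x
      constructor
      · rintro ⟨h1, h2⟩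
        exact ⟨φ x, by simpa using h2, φ.left_inv h1⟩
      · rintro ⟨w, hw, rfl⟩
        refine ⟨φ.map_target (htar hw), ?_⟩
        rw [φ.right_inv (htar hw)]
        simpa using hw
    rw [this]
    exact (isCompact_closedBall 0 ρ).image_of_continuousOn (φ.symm.continuousOn.mono htar)
  let xx : E → M := fun y => f^[l * N'] (ψ.symm (0, y))
  let G : M → E := fun x => (ψ (f.symm^[l * N'] x)).2
  have hG : ∀ y, ‖y‖ < s' → G (xx y) = y := by
    intro y hy
    simp only [G, xx, symm_iter_iter, ψ.right_inv (htψ y hy)]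
  have hG1 : ∀ y, ‖y‖ < s' → (ψ (f.symm^[l * N'] (xx y))).1 = 0 := by
    intro y hy
    simp only [xx, symm_iter_iter, ψ.right_inv (htψ y hy)]
  have hxG : ∀ x, Stab f.symm α x q → ‖G x‖ < s' ∧ xx (G x) = x := by
    intro x hx
    obtain ⟨h1, h2, h3⟩ := hU3 x hx
    refine ⟨(norm_snd_le _).trans_lt h2, ?_⟩
    have h4 : ((0 : A'), G x) = ψ (f.symm^[l * N'] x) := Prod.ext h3.symm rfl
    simp only [xx, h4, ψ.left_inv h1, iter_symm_iter]
  have hxc : ∀ y, ‖y‖ < s' → ContinuousAt xx y := by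
    intro y hy
    have h1 : ContinuousAt (fun y : E => ((0 : A'), y)) y := by fun_prop
    have h2 : ContinuousAt ψ.symm ((fun y : E => ((0 : A'), y)) y) :=
      ψ.symm.continuousAt (htψ y hy)
    exact (iter_cont f _).continuousAt.comp (h2.comp h1)
  have hqG : G q = 0 := by
    simp only [G]
    rw [hψ.swap.per_mul, hψ.zero]; rfl
  have hx0 : xx 0 = q := by
    simp only [xx]
    have : ((0 : A'), (0 : E)) = 0 := rfl
    rw [this, hψ.symm_zero, hψ.per_mul]
  have hqX : q ∈ X := ⟨hqs, hq.le⟩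
  have hrefl : ∀ g : M ≃ₜ M, Stab g α q q := fun g i => by simpa using hα.le
  set K : Set E := {y | ‖y‖ < s' ∧ xx y ∈ X ∧ Stab f.symm α (xx y) q} with hKdef
  have hK : IsCompact K := by
    have : K = G '' (X ∩ {x | Stab f.symm α x q}) := by
      ext y
      constructor
      · rintro ⟨h1, h2, h3⟩
        exact ⟨xx y, ⟨h2, h3⟩, hG y h1⟩
      · rintro ⟨x, ⟨h1, h2⟩, rfl⟩
        obtain ⟨h3, h4⟩ := hxG x h2
        refine ⟨h3, ?_, ?_⟩
        · rw [h4]; exact h1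
        · rw [h4]; exact h2
    rw [this]
    refine (hXc.inter_right (stab_closed _ _ _)).image_of_continuousOn ?_
    intro x hx
    have h1 : ContinuousAt ψ (f.symm^[l * N'] x) := ψ.continuousAt (hU3 x hx.2).1
    have h2 : ContinuousAt (fun x => ψ (f.symm^[l * N'] x)) x :=
      ContinuousAt.comp h1 (iter_cont f.symm (l * N')).continuousAt
    exact h2.snd.continuousWithinAt
  have hec : ∀ y ∈ K, ContinuousAt (fun y => φ (xx y)) y := fun y hy =>
    ContinuousAt.comp (φ.continuousAt hy.2.1.1) (hxc y hy.1)
  have hCc : IsCompact (φ '' (X ∩ {x | Stab f α x q})) :=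
    (hXc.inter_right (stab_closed _ _ _)).image_of_continuousOn
      (φ.continuousOn.mono fun x hx => hx.1.1)
  refine core (A := A) (B := B) (E := E) hdim hρ (K := K) hK (fun y => φ (xx y))
    (fun y hy => (hec y hy).continuousWithinAt) (fun y hy => hy.2.1.2) ?_
    (C := φ '' (X ∩ {x | Stab f α x q})) (O := φ.target ∩ φ.symm ⁻¹' OS) hCc
    (φ.symm.isOpen_inter_preimage hOS) ?_ (fun w => (ψ (f^[l * N] (φ.symm w))).2) ?_ ?_ ?_ ?_
    ?_ ?_ (c := 2 ^ (N + N')) (by positivity) ?_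
  · intro y hy
    have hyK : y ∈ K := hK.isClosed.frontier_subset hy
    by_contra hne
    have h1 : ‖(φ (xx y)).2‖ < ρ := lt_of_le_of_ne ((norm_snd_le _).trans hyK.2.1.2) hne
    have h2 : ‖φ (xx y)‖ < ρ := by
      rw [Prod.norm_def]
      exact max_lt (hu _ hyK.2.1.1 hyK.2.1.2 hyK.2.2) h1
    refine hy.2 (mem_interior_iff_mem_nhds.2 ?_)
    have e1 : ∀ᶠ y' in nhds y, ‖y'‖ < s' := continuous_norm.continuousAt.eventually
      (gt_mem_nhds hyK.1)
    have e2 : ∀ᶠ y' in nhds y, xx y' ∈ φ.source :=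
      (hxc y hyK.1).eventually (φ.open_source.mem_nhds hyK.2.1.1)
    have e3 : ∀ᶠ y' in nhds y, ‖φ (xx y')‖ < ρ := (hec y hyK).norm.eventually (gt_mem_nhds h2)
    have e4 : ∀ᶠ y' in nhds y, xx y' ∈ OU := (hxc y hyK.1).eventually
      (hOU.mem_nhds (hU1 _ (hab _ hyK.2.1.1 hyK.2.1.2 hyK.2.2)))
    filter_upwards [e1, e2, e3, e4] with y' a1 a2 a3 a4
    exact ⟨a1, ⟨a2, a3.le⟩, hU2 _ a4 (hG1 y' a1)⟩
  · rintro _ ⟨x, ⟨⟨h1, h2⟩, h3⟩, rfl⟩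
    refine ⟨φ.map_source h1, ?_⟩
    rw [mem_preimage, φ.left_inv h1]
    exact hS1 _ (haf x h1 h2 h3)
  · rintro w ⟨⟨h1, h2⟩, h3⟩
    have c1 : ContinuousAt φ.symm w := φ.symm.continuousAt h1
    have c2 : ContinuousAt (fun w => f^[l * N] (φ.symm w)) w :=
      (iter_cont f _).continuousAt.comp c1
    have c3 : ContinuousAt ψ ((fun w => f^[l * N] (φ.symm w)) w) := ψ.continuousAt (hS0 _ h2)
    exact (ContinuousAt.comp (f := fun w => f^[l * N] (φ.symm w)) c3 c2).snd.continuousWithinAt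
  · rintro w ⟨h1, h2⟩ h3
    constructor
    · intro h4
      refine ⟨φ.symm w, ⟨⟨φ.map_target h1, ?_⟩, hS2 _ h2 h4⟩, φ.right_inv h1⟩
      rwa [φ.right_inv h1]
    · rintro ⟨x, ⟨⟨h4, h5⟩, h6⟩, rfl⟩
      simp only [φ.left_inv h4]
      exact (hS3 x h6).2.2
  · rintro _ ⟨x, ⟨⟨h4, h5⟩, h6⟩, rfl⟩
    exact hs x h4 h5 h6
  · rintro y hy ⟨x, ⟨⟨h4, h5⟩, h6⟩, h7⟩
    have h8 : x = xx y := φ.injOn h4 hy.2.1.1 h7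
    rw [h8] at h6
    have h9 : xx y = q := hE _ _ h6 hy.2.2
    rw [← hG y hy.1, h9, hqG]
  · exact ⟨by simpa using hs', by rw [hx0]; exact hqX, by rw [hx0]; exact hrefl _⟩
  · exact ⟨q, ⟨hqX, hrefl _⟩, by simp only [hx0]⟩
  · have h1 : ContinuousAt (fun y : E => ψ.symm ((0 : A'), y)) 0 := by
      have h1 : ContinuousAt (fun y : E => ((0 : A'), y)) 0 := by fun_prop
      have h2 : ContinuousAt ψ.symm ((fun y : E => ((0 : A'), y)) 0) :=
        ψ.symm.continuousAt (htψ 0 (by simpa using hs'))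
      exact h2.comp h1
    have hz : ψ.symm ((0 : A'), (0 : E)) = q := hψ.symm_zero
    have h2 := hψ.lin (N + N')
    rw [← hz] at h2
    have e1 := h1.eventually h2
    have e2 : ∀ᶠ y in nhds (0 : E), xx y ∈ φ.source :=
      (hxc 0 (by simpa using hs')).eventually (φ.open_source.mem_nhds (by rw [hx0]; exact hqs))
    have e3 : ∀ᶠ y in nhds (0 : E), ‖y‖ < s' := continuous_norm.continuousAt.eventually
      (gt_mem_nhds (by simpa using hs'))
    filter_upwards [e1, e2, e3] with y a1 a2 a3
    rw [ψ.right_inv (htψ y a3), Nat.mul_add, Function.iterate_add_apply] at a1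
    simp only [φ.left_inv a2]
    exact a1

end Contra

section Setup

variable {M : Type*} [MetricSpace M]

lemma setup_nhds [CompactSpace M]
    {A B : Type*} [NormedAddCommGroup A] [NormedSpace ℝ A] [FiniteDimensional ℝ A]
    [NormedAddCommGroup B] [NormedSpace ℝ B] [FiniteDimensional ℝ B]
    {f : M ≃ₜ M} {α : ℝ} (hα : 0 < α)
    (hE : ∀ x y, Stab f α x y → Stab f.symm α x y → x = y)
    {φ : OpenPartialHomeomorph M (A × B)} {l : ℕ} {p : M} (hφ : HChart f l p φ) :
    ∀ᶠ q in nhds p, ∀ (a e l' : ℕ) (ψ : OpenPartialHomeomorph M ((Fin a → ℝ) × (Fin e → ℝ))),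
      HChart f l' q ψ → Module.finrank ℝ B ≤ e := by
  obtain ⟨ρ1, hρ1, h11, h12⟩ := hφ.side hα hE
  obtain ⟨ρ2, hρ2, h21, h22⟩ := hφ.swap.side hα (fun x y a b => hE x y b a)
  simp only [swapChart_apply, swapChart_source, Prod.snd_swap, norm_swap'] at h21 h22
  obtain ⟨ρ3, hρ3, hb⟩ := Metric.mem_nhds_iff.1 (φ.open_target.mem_nhds hφ.zero_mem)
  obtain ⟨ρ, hρ, hρlt⟩ := exists_between (lt_min hρ1 (lt_min hρ2 hρ3))
  rw [lt_min_iff, lt_min_iff] at hρlt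
  obtain ⟨l1, l2, l3⟩ := hρlt
  have htar : closedBall 0 ρ ⊆ φ.target := (closedBall_subset_ball l3).trans hb
  set X : Set M := {x | x ∈ φ.source ∧ ‖φ x‖ ≤ ρ} with hXdef
  have hXc : IsCompact X := by
    have : X = φ.symm '' closedBall 0 ρ := by
      ext x
      constructor
      · rintro ⟨h1, h2⟩
        exact ⟨φ x, by simpa using h2, φ.left_inv h1⟩
      · rintro ⟨w, hw, rfl⟩
        refine ⟨φ.map_target (htar hw), ?_⟩
        rw [φ.right_inv (htar hw)]
        simpa using hw
    rw [this]
    exact (isCompact_closedBall 0 ρ).image_of_continuousOn (φ.symm.continuousOn.mono htar)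
  have n1 := near (f := f) (p := p) (φ := φ) (α := α) hXc (fun x hx => hx.1)
    (fun x hx hst => h12 x hx.1 (hx.2.trans_lt l1) hst) (half_pos hρ)
  have n2 := near (f := f.symm) (p := p) (φ := swapChart φ) (α := α) hXc (fun x hx => hx.1)
    (fun x hx hst => h22 x hx.1 (hx.2.trans_lt l2) hst) hρ
  have n3 : ∀ᶠ q in nhds p, q ∈ φ.source ∩ φ ⁻¹' ball 0 ρ :=
    (φ.isOpen_inter_preimage isOpen_ball).mem_nhds ⟨hφ.mem, by simp [hφ.zero, hρ]⟩
  filter_upwards [n1, n2, n3] with q a1 a2 a3 a e l' ψ hψ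
  by_contra hlt
  have hq : ‖φ q‖ < ρ := by simpa using a3.2
  refine contra_link (B := B) (E := Fin e → ℝ) (by simpa using hlt) hα hE hψ hρ htar
    (fun x hx hxρ hst => h11 x hx (hxρ.trans_lt l1) q a3.1 (hq.trans l1) hst)
    (fun x hx hxρ hst => h21 x hx (hxρ.trans_lt l2) q a3.1 (hq.trans l2) hst) a3.1 hq
    (fun x hx hxρ hst => a1 x ⟨hx, hxρ⟩ hst) (fun x hx hxρ hst => a2 x ⟨hx, hxρ⟩ hst)

lemma exists_chart {f : M ≃ₜ M} {n r : ℕ} {p : M} (hp : p ∈ PerHr f n r) :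
    ∃ (l : ℕ) (φ : OpenPartialHomeomorph M ((Fin r → ℝ) × (Fin (n - r) → ℝ))),
      HChart f l p φ := by
  classical
  obtain ⟨l, hl, hper, U, V, h, hU, hV, h0, hpU, hp0, hconj⟩ := hp
  have hit : ∀ z, (f.toEquiv ^ l) z = f^[l] z := fun z => by
    rw [← Equiv.Perm.iterate_eq_pow]; rfl
  let F : M → ModelSp n r := fun z => if hz : z ∈ U then (h ⟨z, hz⟩ : ModelSp n r) else 0
  let H : ModelSp n r → M := fun w => if hw : w ∈ V then (h.symm ⟨w, hw⟩ : M) else p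
  have hF : ∀ z (hz : z ∈ U), F z = h ⟨z, hz⟩ := fun z hz => dif_pos hz
  have hH : ∀ w (hw : w ∈ V), H w = h.symm ⟨w, hw⟩ := fun w hw => dif_pos hw
  let φ : OpenPartialHomeomorph M (ModelSp n r) :=
    { toFun := F
      invFun := H
      source := U
      target := V
      map_source' := fun z hz => by rw [hF z hz]; exact (h ⟨z, hz⟩).2
      map_target' := fun w hw => by rw [hH w hw]; exact (h.symm ⟨w, hw⟩).2
      left_inv' := fun z hz => by
        rw [hF z hz, hH _ (h ⟨z, hz⟩).2]; simp
      right_inv' := fun w hw => by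
        rw [hH w hw, hF _ (h.symm ⟨w, hw⟩).2]; simp
      open_source := hU
      open_target := hV
      continuousOn_toFun := by
        rw [continuousOn_iff_continuous_domRestrict]
        have : U.domRestrict F = fun z => (h z : ModelSp n r) := by
          ext1 z; exact hF z.1 z.2
        rw [this]
        exact continuous_subtype_val.comp h.continuous
      continuousOn_invFun := by
        rw [continuousOn_iff_continuous_domRestrict]
        have : V.domRestrict H = fun w => (h.symm w : M) := by
          ext1 w; exact hH w.1 w.2
        rw [this]
        exact continuous_subtype_val.comp h.symm.continuous }
  have hφ : ∀ z (hz : z ∈ U), φ z = h ⟨z, hz⟩ := hF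
  refine ⟨l, φ, hl, by rw [← hit]; exact hper, hpU, by rw [hφ p hpU]; exact hp0, ?_⟩
  intro z hz hz'
  have hz2 : (f.toEquiv ^ l) z ∈ U := by rw [hit]; exact hz'
  have h1 := hconj z hz hz2
  rw [← hφ z hz, ← hφ _ hz2, hit] at h1
  rw [h1]
  refine Prod.ext ?_ ?_
  · ext i; simp [modelL, div_eq_inv_mul]
  · ext i; simp [modelL]

lemma stab_of_expansive {f : M ≃ₜ M} {α : ℝ} (hexp : IsExpansive f α) (x y : M)
    (h1 : Stab f α x y) (h2 : Stab f.symm α x y) : x = y := by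
  by_contra hne
  obtain ⟨k, hk⟩ := hexp x y hne
  have hit : ∀ (g : M ≃ₜ M) (l : ℕ) z, (g.toEquiv ^ l) z = g^[l] z := fun g l z => by
    rw [← Equiv.Perm.iterate_eq_pow]; rfl
  rcases Int.eq_nat_or_neg k with ⟨j, rfl | rfl⟩
  · simp only [iterZ, zpow_natCast, hit] at hk
    exact absurd (h1 j) (not_le.2 hk)
  · have : f.toEquiv ^ (-(j : ℤ)) = f.symm.toEquiv ^ j := by
      rw [zpow_neg, zpow_natCast, ← inv_pow]; rfl
    simp only [iterZ, this, hit] at hk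
    exact absurd (h2 j) (not_le.2 hk)

end Setup

/-- **Proposition (1).** For an expansive homeomorphism of a compact connected boundaryless
`n`-manifold, each `Per_H^k` (`1 ≤ k ≤ n-1`) is open in `Per_H`. -/
theorem stmt9 {M : Type*} [MetricSpace M] [CompactSpace M] [ConnectedSpace M]
    (n : ℕ) [ChartedSpace (EuclideanSpace ℝ (Fin n)) M]
    (f : M ≃ₜ M) (α : ℝ) (hα : 0 < α) (hexp : IsExpansive f α) :
    ∀ k : ℕ, 1 ≤ k → k ≤ n - 1 →
      ∀ p ∈ PerHr f n k, ∃ V : Set M, IsOpen V ∧ p ∈ V ∧ PerH f n ∩ V ⊆ PerHr f n k := by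
  intro k hk1 hkn p hp
  have hE := stab_of_expansive hexp
  have hE' : ∀ x y, Stab f.symm α x y → Stab f.symm.symm α x y → x = y :=
    fun x y a b => hE x y b a
  obtain ⟨l, φ, hφ⟩ := exists_chart hp
  have e1 := setup_nhds hα hE hφ
  have e2 := setup_nhds hα hE' hφ.swap
  obtain ⟨V, hV, hVo, hpV⟩ := _root_.eventually_nhds_iff.1 (e1.and e2)
  refine ⟨V, hVo, hpV, ?_⟩
  rintro q ⟨hq, hqV⟩
  simp only [PerH, mem_iUnion, Finset.mem_range] at hq
  obtain ⟨r, hr, hqr⟩ := hq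
  obtain ⟨l', ψ, hψ⟩ := exists_chart hqr
  have a1 := (hV q hqV).1 _ _ _ ψ hψ
  have a2 := (hV q hqV).2 _ _ _ (swapChart ψ) hψ.swap
  simp only [Module.finrank_fintype_fun_eq_card, Fintype.card_fin] at a1 a2
  have : r = k := by omega
  exact this ▸ hqr
end
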